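/- Let d ≥ 5 and let 𝒰 be the uniform spanning forest of Z^d. There exists a constant C₁, depending only on d, such that for all integers k ≥ 0 and n ≥ 1, E( |B_𝒰(0,n)|^k ) ≤ C₁^k · k! · n^{2k}, where B_𝒰(0,n) is the ball of radius n around 0 in the intrinsic (graph) metric of 𝒰. -/

import Mathlib

open MeasureTheory
open scoped ENNReal Classical

namespace USFPaper

/-- Vertices of the nearest-neighbour integer lattice `ℤ^d`. -/
abbrev V (d : ℕ) := Fin d → ℤ

variable {d : ℕ}

/-- Nearest-neighbour adjacency in `ℤ^d`. -/
def adj (x y : V d) : Prop := (∑ i, |x i - y i|) = 1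

/-- The cube `Q(x,r) = { y : ‖x - y‖_∞ ≤ r }`. -/
def cube (x : V d) (r : ℕ) : Set (V d) := { y | ∀ i, |y i - x i| ≤ (r : ℤ) }

/-- Euclidean distance on `ℤ^d`. -/
noncomputable def eudist (x y : V d) : ℝ := Real.sqrt (∑ i, ((x i : ℝ) - (y i : ℝ)) ^ 2)

/-- Configurations: subgraphs of `ℤ^d`, encoded by the indicator of their edge set
(on unordered pairs of vertices). -/
abbrev Config (d : ℕ) := Sym2 (V d) → Bool

/-- `e` is an edge of the lattice `ℤ^d`. -/
def isLatticeEdge (e : Sym2 (V d)) : Prop := ∃ a b : V d, e = s(a, b) ∧ adj a b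

/-- Spanning trees of the wired graph `G_A^W` obtained from `ℤ^d` by collapsing the
complement of the finite set `A` to a single vertex: sets `T` of lattice edges, each
with at least one endpoint in `A`, with exactly `|A|` edges, and such that every
vertex of `A` is joined by a path of edges of `T` to the (collapsed) complement
of `A`. -/
def wiredSpanningTrees (A : Set (V d)) : Set (Set (Sym2 (V d))) :=
  { T | (∀ e ∈ T, isLatticeEdge e ∧ ∃ v ∈ e, v ∈ A) ∧
        T.ncard = A.ncard ∧
        ∀ x ∈ A, ∃ l : List (V d),
          l.Chain' (fun u w => adj u w ∧ s(u, w) ∈ T) ∧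
          l.head? = some x ∧ ∃ y, l.getLast? = some y ∧ y ∉ A }

/-- The cylinder event prescribing the configuration on the finite edge set `K`. -/
def cylEvent (K : Finset (Sym2 (V d))) (f : Sym2 (V d) → Bool) : Set (Config d) :=
  { ω | ∀ e ∈ K, ω e = f e }

/-- `μ` is the weak limit of the uniform spanning trees of the wired graphs of the
exhausting sequence `Dseq`: for every cylinder event, the proportion of wired spanning
trees of `Dseq r` compatible with it converges to its `μ`-probability. -/
def IsWiredLimit (Dseq : ℕ → Set (V d)) (μ : Measure (Config d)) : Prop :=
  ∀ (K : Finset (Sym2 (V d))) (f : Sym2 (V d) → Bool),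
    Filter.Tendsto
      (fun r : ℕ =>
        ((Set.ncard { T ∈ wiredSpanningTrees (Dseq r) |
            ∀ e ∈ K, (e ∈ T ↔ f e = true) } : ℝ) /
         (Set.ncard (wiredSpanningTrees (Dseq r)) : ℝ)))
      Filter.atTop
      (nhds ((μ (cylEvent K f)).toReal))

/-- `μ` is the uniform spanning forest of `ℤ^d`: the weak limit of the uniform
spanning trees of the (wired) boxes `Q_r`. -/
def IsUSF (μ : Measure (Config d)) : Prop :=
  IsWiredLimit (fun r => cube (0 : V d) r) μ

/-- The ball `B_𝒰(0,n)` of radius `n` about the origin in the intrinsic (graph)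
metric of the configuration `ω`. -/
def ballU (ω : Config d) (n : ℕ) : Set (V d) :=
  { y | ∃ l : List (V d),
      l.Chain' (fun u w => adj u w ∧ ω s(u, w) = true) ∧
      l.head? = some 0 ∧ l.getLast? = some y ∧ l.length ≤ n + 1 }

/-- The component `𝒰₀` of the origin in the configuration `ω`, for a domain `D`:
all vertices joined to `0` by a path of open edges not leaving `D` (i.e. not passing
through the collapsed vertex `r_D`). -/
def comp0In (D : Set (V d)) (ω : Config d) : Set (V d) :=
  { y | ∃ l : List (V d),
      l.Chain' (fun u w => adj u w ∧ ω s(u, w) = true) ∧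
      l.head? = some 0 ∧ l.getLast? = some y ∧ ∀ v ∈ l, v ∈ D }

/-! Wilson's algorithm builds the forest from loop-erased random walks, and the proof bounds how
long these paths stay short. Loop erasing keeps at least one vertex for each separated piece of the
walk. For `d ≥ 5` the heat kernel satisfies `∑ (t + 1) p_t < ∞`, so the walk is cut into separated
pieces at a positive density of times: a walk whose loop erasure has at most `n` vertices has
typically run for `O(n)` steps.

Let `N(B)` be the number of spanning forests, encoded by their parent maps, of a finite set `B`
wired at its boundary. Popping cycles shows that the weights `η ↦ N(B \ η)` on the simple paths from
a vertex of `B` are superinvariant for loop-erased random walk, so that the bound on the time spent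
at short paths becomes `∑ 2d N(B \ η) ≤ C n N(B)`, the sum running over the `η` with at most `n`
vertices. A vertex of the ball of radius `n` is joined to the tree already explored by such a path,
so each new factor of `|B_𝒰(0,n)|` costs at most `C n` times the size of the explored tree. That
tree grows by at most `n` vertices at each of the `k` steps, whence `k! n^{2k}`. -/

open scoped BigOperators

section WordExpect

variable {S : Type*} [Fintype S]

/-- Expectation of a function of a word made of `t` independent uniform letters. -/
noncomputable def wordExpect (t : ℕ) (φ : List S → ℝ) : ℝ :=
  𝔼 w : Fin t → S, φ (List.ofFn w)

lemma wordExpect_zero (φ : List S → ℝ) : wordExpect 0 φ = φ [] := by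
  simp [wordExpect]

lemma wordExpect_succ (t : ℕ) (φ : List S → ℝ) :
    wordExpect (t + 1) φ = 𝔼 s, wordExpect t fun l => φ (s :: l) := by
  unfold wordExpect
  rw [← Finset.expect_product', Finset.univ_product_univ]
  exact (Fintype.expect_equiv (Fin.consEquiv fun _ => S) _ _ fun x => by
    simp [Fin.consEquiv, List.ofFn_succ]).symm

lemma wordExpect_mono {t : ℕ} {φ ψ : List S → ℝ} (h : ∀ l, l.length = t → φ l ≤ ψ l) :
    wordExpect t φ ≤ wordExpect t ψ :=
  Finset.expect_le_expect fun _ _ => h _ List.length_ofFn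

lemma wordExpect_congr {t : ℕ} {φ ψ : List S → ℝ} (h : ∀ l, l.length = t → φ l = ψ l) :
    wordExpect t φ = wordExpect t ψ :=
  Finset.expect_congr rfl fun _ _ => h _ List.length_ofFn

lemma wordExpect_nonneg {t : ℕ} {φ : List S → ℝ} (h : ∀ l, 0 ≤ φ l) : 0 ≤ wordExpect t φ :=
  Finset.expect_nonneg fun _ _ => h _

lemma wordExpect_add (t : ℕ) (φ ψ : List S → ℝ) :
    wordExpect t (fun l => φ l + ψ l) = wordExpect t φ + wordExpect t ψ :=
  Finset.expect_add_distrib ..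

lemma wordExpect_const_mul (t : ℕ) (c : ℝ) (φ : List S → ℝ) :
    wordExpect t (fun l => c * φ l) = c * wordExpect t φ :=
  (Finset.mul_expect ..).symm

lemma wordExpect_sum {ι : Type*} (t : ℕ) (I : Finset ι) (φ : ι → List S → ℝ) :
    wordExpect t (fun l => ∑ i ∈ I, φ i l) = ∑ i ∈ I, wordExpect t (φ i) :=
  Finset.expect_sum_comm ..

lemma wordExpect_const [Nonempty S] (t : ℕ) (c : ℝ) : wordExpect t (fun _ : List S => c) = c :=
  Fintype.expect_const c

lemma wordExpect_append (a b : ℕ) (φ : List S → ℝ) :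
    wordExpect (a + b) φ = wordExpect a fun l => wordExpect b fun l' => φ (l ++ l') := by
  induction a generalizing φ with
  | zero => simp [wordExpect_zero]
  | succ a ih =>
    rw [Nat.add_right_comm, wordExpect_succ, wordExpect_succ]
    simp only [ih, List.cons_append]

lemma sq_wordExpect_le [Nonempty S] (t : ℕ) (φ : List S → ℝ) :
    wordExpect t φ ^ 2 ≤ wordExpect t fun l => φ l ^ 2 := by
  have h : wordExpect t (fun l => 2 * wordExpect t φ * φ l + -wordExpect t φ ^ 2)
      ≤ wordExpect t fun l => φ l ^ 2 :=
    wordExpect_mono fun l _ => by linarith [sq_nonneg (φ l - wordExpect t φ)]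
  rw [wordExpect_add, wordExpect_const_mul, wordExpect_const] at h
  linarith

/-- Probability that a word of `t` independent uniform letters satisfies `P`. -/
noncomputable def wordProb (t : ℕ) (P : List S → Prop) : ℝ :=
  wordExpect t fun l => if P l then 1 else 0

lemma wordProb_nonneg (t : ℕ) (P : List S → Prop) : 0 ≤ wordProb t P :=
  wordExpect_nonneg fun _ => by split_ifs <;> norm_num

lemma wordProb_mono {t : ℕ} {P Q : List S → Prop} (h : ∀ l, l.length = t → P l → Q l) :
    wordProb t P ≤ wordProb t Q :=
  wordExpect_mono fun l hl => by
    by_cases hP : P l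
    · simp [hP, h l hl hP]
    · simp only [hP, if_false]; split_ifs <;> norm_num

lemma wordProb_le_one [Nonempty S] (t : ℕ) (P : List S → Prop) : wordProb t P ≤ 1 :=
  (wordExpect_mono fun _ _ => by split_ifs <;> norm_num).trans_eq (wordExpect_const t 1)

lemma wordProb_or_le (t : ℕ) (P Q : List S → Prop) :
    wordProb t (fun l => P l ∨ Q l) ≤ wordProb t P + wordProb t Q := by
  rw [wordProb, wordProb, wordProb, ← wordExpect_add]
  refine wordExpect_mono fun l _ => ?_
  by_cases hP : P l <;> by_cases hQ : Q l <;> norm_num [hP, hQ]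

lemma wordExpect_card_filter {ι : Type*} (t : ℕ) (I : Finset ι) (P : ι → List S → Prop) :
    wordExpect t (fun l => ((I.filter fun i => P i l).card : ℝ)) = ∑ i ∈ I, wordProb t (P i) := by
  simp only [Finset.card_filter, Nat.cast_sum, Nat.cast_ite, Nat.cast_one, Nat.cast_zero]
  exact wordExpect_sum t I fun i l => if P i l then 1 else 0

lemma mul_wordProb_le_card_filter_le {ι : Type*} (t : ℕ) (c : ℝ) (I : Finset ι)
    (P : ι → List S → Prop) :
    c * wordProb t (fun l => c ≤ (I.filter fun i => P i l).card) ≤ ∑ i ∈ I, wordProb t (P i) := by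
  rw [← wordExpect_card_filter, wordProb, ← wordExpect_const_mul]
  refine wordExpect_mono fun l _ => ?_
  split_ifs with h
  · simpa using h
  · simp

lemma wordProb_exists_le {ι : Type*} (t : ℕ) (I : Finset ι) (P : ι → List S → Prop) :
    wordProb t (fun l => ∃ i ∈ I, P i l) ≤ ∑ i ∈ I, wordProb t (P i) := by
  have h := mul_wordProb_le_card_filter_le t 1 I P
  rw [one_mul] at h
  refine (wordProb_mono fun l _ ⟨i, hi, hP⟩ => ?_).trans h
  exact_mod_cast Finset.card_pos.2 ⟨i, Finset.mem_filter.2 ⟨hi, hP⟩⟩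

end WordExpect

section LineWalk

/-- Transition probability from `0` to `y` in `k` steps of the simple random walk on `ℤ`. -/
noncomputable def walkProb : ℕ → ℤ → ℝ
  | 0, y => if y = 0 then 1 else 0
  | k + 1, y => (walkProb k (y - 1) + walkProb k (y + 1)) / 2

lemma walkProb_eq_zero_of_lt_abs {k : ℕ} {y : ℤ} (h : (k : ℤ) < |y|) : walkProb k y = 0 := by
  induction k generalizing y with
  | zero => exact if_neg fun hy => by simp [hy] at h
  | succ k ih =>
    rw [lt_abs] at h
    rw [walkProb, ih (lt_abs.2 (by omega)), ih (lt_abs.2 (by omega)), add_zero, zero_div]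

lemma walkProb_eq_zero_of_odd {k : ℕ} {y : ℤ} (h : Odd (y + k)) : walkProb k y = 0 := by
  induction k generalizing y with
  | zero => exact if_neg fun hy => by simp [hy] at h
  | succ k ih =>
    rw [Int.odd_iff] at h
    rw [walkProb, ih (Int.odd_iff.2 (by omega)), ih (Int.odd_iff.2 (by omega)), add_zero, zero_div]

lemma walkProb_two_mul_sub (k j : ℕ) : walkProb k (2 * j - k) = (k.choose j : ℝ) / 2 ^ k := by
  induction k generalizing j with
  | zero => cases j <;> simp [walkProb]; omega
  | succ k ih =>
    rw [walkProb, show (2 * (j : ℤ) - ((k + 1 : ℕ) : ℤ) + 1) = 2 * j - k by push_cast; ring, ih j]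
    cases j with
    | zero =>
      rw [walkProb_eq_zero_of_lt_abs (lt_abs.2 (by omega))]
      simp only [Nat.choose_zero_right]
      ring
    | succ j =>
      rw [show (2 * ((j + 1 : ℕ) : ℤ) - ((k + 1 : ℕ) : ℤ) - 1) = 2 * j - k by push_cast; ring,
        ih j, Nat.choose_succ_succ]
      push_cast
      ring

lemma walkProb_nonneg (k : ℕ) (y : ℤ) : 0 ≤ walkProb k y := by
  induction k generalizing y with
  | zero => rw [walkProb]; split_ifs <;> norm_num
  | succ k ih => rw [walkProb]; linarith [ih (y - 1), ih (y + 1)]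

lemma walkProb_le_choose_half (k : ℕ) (y : ℤ) :
    walkProb k y ≤ (k.choose (k / 2) : ℝ) / 2 ^ k := by
  rcases lt_or_ge (k : ℤ) |y| with hout | hin
  · rw [walkProb_eq_zero_of_lt_abs hout]; positivity
  rcases Int.even_or_odd (y + k) with ⟨j, hj⟩ | hodd
  · lift j to ℕ using by linarith [neg_abs_le y]
    obtain rfl : y = 2 * j - k := by linarith
    rw [walkProb_two_mul_sub]
    gcongr
    exact Nat.choose_le_middle j k
  · rw [walkProb_eq_zero_of_odd hodd]; positivity

lemma centralBinom_sq_mul_le (n : ℕ) : (n.centralBinom : ℝ) ^ 2 * (2 * n + 1) ≤ (4 ^ n) ^ 2 := by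
  induction n with
  | zero => simp
  | succ n ih =>
    have hrec : ((n : ℝ) + 1) * (n + 1).centralBinom = 2 * (2 * n + 1) * n.centralBinom := by
      exact_mod_cast Nat.succ_mul_centralBinom_succ n
    refine le_of_mul_le_mul_left ?_ (by positivity : (0 : ℝ) < (n + 1) ^ 2)
    calc ((n : ℝ) + 1) ^ 2 * (((n + 1).centralBinom : ℝ) ^ 2 * (2 * (n + 1 : ℕ) + 1))
        = (((n : ℝ) + 1) * (n + 1).centralBinom) ^ 2 * (2 * n + 3) := by push_cast; ring
      _ = 4 * (((2 : ℝ) * n + 1) * (2 * n + 3)) * ((n.centralBinom : ℝ) ^ 2 * (2 * n + 1)) := by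
          rw [hrec]; ring
      _ ≤ 4 * (4 * ((n : ℝ) + 1) ^ 2) * (4 ^ n) ^ 2 := by gcongr 4 * ?_ * ?_; nlinarith
      _ = ((n : ℝ) + 1) ^ 2 * (4 ^ (n + 1)) ^ 2 := by ring

lemma choose_half_sq_mul_le (k : ℕ) :
    (k.choose (k / 2) : ℝ) ^ 2 * (k + 1) ≤ (2 ^ k) ^ 2 := by
  rcases Nat.even_or_odd' k with ⟨m, rfl | rfl⟩
  · have h := centralBinom_sq_mul_le m
    rw [Nat.centralBinom] at h
    rw [Nat.mul_div_cancel_left m two_pos, pow_mul]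
    norm_num at h ⊢
    exact h
  · have hcb : (m + 1).centralBinom = 2 * (2 * m + 1).choose m := by
      rw [Nat.centralBinom, Nat.mul_succ, Nat.choose_succ_succ, ← Nat.choose_symm_half m]
      ring
    have h := centralBinom_sq_mul_le (m + 1)
    rw [hcb] at h
    have hpow : (2 : ℝ) ^ (2 * m + 1) = 2 * 4 ^ m := by rw [pow_succ, pow_mul]; norm_num; ring
    rw [show (2 * m + 1) / 2 = m by omega, hpow]
    push_cast [pow_succ (4 : ℝ)] at h ⊢
    nlinarith [sq_nonneg ((2 * m + 1).choose m : ℝ)]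

lemma walkProb_sq_le (k : ℕ) (y : ℤ) : walkProb k y ^ 2 ≤ 1 / ((k : ℝ) + 1) :=
  calc walkProb k y ^ 2 ≤ ((k.choose (k / 2) : ℝ) / 2 ^ k) ^ 2 := by
        gcongr
        exacts [walkProb_nonneg k y, walkProb_le_choose_half k y]
    _ ≤ 1 / ((k : ℝ) + 1) := by
        rw [div_pow, div_le_div_iff₀ (by positivity) (by positivity), one_mul]
        exact choose_half_sq_mul_le k

end LineWalk

section LetterCount

variable {ι : Type*} [DecidableEq ι]

/-- The vector recording how often each letter occurs in a word. -/
def letterCount (l : List ι) : ι → ℕ := fun i => l.count i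

lemma letterCount_nil : letterCount ([] : List ι) = 0 := rfl

lemma letterCount_cons (j : ι) (l : List ι) :
    letterCount (j :: l) = letterCount l + Pi.single j 1 := by
  ext i
  simp [letterCount, List.count_cons, Pi.single_apply, eq_comm (a := i)]

variable [Fintype ι]

lemma wordExpect_succ_letterCount_mul (t : ℕ) (i : ι) (φ : (ι → ℕ) → ℝ) :
    wordExpect (t + 1) (fun l => (letterCount l i : ℝ) * φ (letterCount l)) =
      (𝔼 s, wordExpect t fun l => (letterCount l i : ℝ) * φ (letterCount l + Pi.single s 1)) +
        1 / Fintype.card ι * wordExpect t fun l => φ (letterCount l + Pi.single i 1) := by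
  have hletter : ∀ s, (wordExpect t fun l =>
      (letterCount (s :: l) i : ℝ) * φ (letterCount (s :: l))) =
        (wordExpect t fun l => (letterCount l i : ℝ) * φ (letterCount l + Pi.single s 1)) +
        if s = i then wordExpect t fun l => φ (letterCount l + Pi.single i 1) else 0 := by
    intro s
    split_ifs with h
    · subst h
      rw [← wordExpect_add]
      refine wordExpect_congr fun l _ => ?_
      rw [letterCount_cons, Pi.add_apply, Pi.single_eq_same]
      push_cast
      ring
    · simp [letterCount_cons, Pi.single_eq_of_ne' h]
  simp only [wordExpect_succ, hletter]
  rw [Finset.expect_add_distrib, Fintype.expect_eq_sum_div_card fun s => if s = i then _ else _,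
    Finset.sum_ite_eq' _ i, if_pos (Finset.mem_univ i), div_eq_inv_mul, one_div]

/-- Size biasing: conditionally on a uniformly chosen position carrying the letter `i`, the
remaining letters are again independent and uniform. -/
lemma wordExpect_letterCount_mul (t : ℕ) (i : ι) (φ : (ι → ℕ) → ℝ) :
    wordExpect (t + 1) (fun l => (letterCount l i : ℝ) * φ (letterCount l)) =
      ((t : ℝ) + 1) / Fintype.card ι *
        wordExpect t fun l => φ (letterCount l + Pi.single i 1) := by
  rw [wordExpect_succ_letterCount_mul]
  induction t generalizing φ with
  | zero => simp [wordExpect_zero, letterCount_nil]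
  | succ t ih =>
    have hshift : ∀ s, (wordExpect (t + 1) fun l =>
        (letterCount l i : ℝ) * φ (letterCount l + Pi.single s 1)) = ((t : ℝ) + 1) /
          Fintype.card ι * wordExpect t fun l => φ (letterCount (s :: l) + Pi.single i 1) := by
      intro s
      refine (wordExpect_succ_letterCount_mul t i fun k => φ (k + Pi.single s 1)).trans
        ((ih fun k => φ (k + Pi.single s 1)).trans ?_)
      simp only [letterCount_cons, add_right_comm]
    have hsplit : wordExpect (t + 1) (fun l => φ (letterCount l + Pi.single i 1)) =
        𝔼 s, wordExpect t fun l => φ (letterCount (s :: l) + Pi.single i 1) := wordExpect_succ _ _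
    simp only [hshift]
    rw [← Finset.mul_expect, ← hsplit]
    push_cast
    ring

lemma wordExpect_prod_one_div_le [Nonempty ι] (I : Finset ι) (t : ℕ) :
    wordExpect t (fun l : List ι => ∏ i ∈ I, (1 / ((letterCount l i : ℝ) + 1))) ≤
      (Fintype.card ι / ((t : ℝ) + 1)) ^ I.card := by
  induction I using Finset.induction_on generalizing t with
  | empty => simp [wordExpect_const]
  | insert i I hi ih =>
    let φ : (ι → ℕ) → ℝ := fun k => 1 / (k i : ℝ) * ∏ j ∈ I, (1 / ((k j : ℝ) + 1))
    have hshift : ∀ l : List ι, φ (letterCount l + Pi.single i 1) =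
        ∏ j ∈ insert i I, (1 / ((letterCount l j : ℝ) + 1)) := by
      intro l
      simp only [φ, Finset.prod_insert hi, Pi.add_apply, Pi.single_eq_same, Nat.cast_succ]
      congr 1
      refine Finset.prod_congr rfl fun j hj => ?_
      rw [Pi.single_eq_of_ne (ne_of_mem_of_not_mem hj hi), add_zero]
    have hcancel : ∀ l : List ι, (letterCount l i : ℝ) * φ (letterCount l) ≤
        ∏ j ∈ I, (1 / ((letterCount l j : ℝ) + 1)) := by
      intro l
      rw [← mul_assoc, mul_one_div]
      exact mul_le_of_le_one_left (by positivity) (div_self_le_one _)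
    have hbias := wordExpect_letterCount_mul t i φ
    simp only [hshift] at hbias
    have hle : ((t : ℝ) + 1) / Fintype.card ι *
        (wordExpect t fun l : List ι => ∏ j ∈ insert i I, (1 / ((letterCount l j : ℝ) + 1))) ≤
          (Fintype.card ι / ((t : ℝ) + 1)) ^ I.card := by
      rw [← hbias]
      refine (wordExpect_mono fun l _ => hcancel l).trans ((ih (t + 1)).trans ?_)
      gcongr
      simp
    rw [← le_div_iff₀' (by positivity)] at hle
    rw [Finset.card_insert_of_notMem hi, pow_succ]
    exact hle.trans_eq (by rw [div_div_eq_mul_div, mul_div_assoc])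

end LetterCount

section HeatKernel

/-- Labels of the `2d` unit steps in `ℤ^d`: a coordinate direction and a sign. -/
abbrev Step (d : ℕ) := Fin d × Bool

/-- The unit vector labelled by `s`. -/
def stepVec (s : Step d) : V d := Pi.single s.1 (if s.2 then 1 else -1)

/-- Total displacement of a word of steps. -/
def displacement (l : List (Step d)) : V d := (l.map stepVec).sum

@[simp] lemma displacement_nil : displacement ([] : List (Step d)) = 0 := rfl

@[simp] lemma displacement_cons (s : Step d) (l : List (Step d)) :
    displacement (s :: l) = stepVec s + displacement l := by
  simp [displacement]

@[simp] lemma displacement_append (l l' : List (Step d)) :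
    displacement (l ++ l') = displacement l + displacement l' := by
  simp [displacement]

/-- Transition probability from `0` to `x` in `t` steps of the simple random walk on `ℤ^d`. -/
noncomputable def heatKernel (t : ℕ) (x : V d) : ℝ :=
  wordProb t fun l : List (Step d) => displacement l = x

lemma heatKernel_zero (x : V d) : heatKernel 0 x = if x = 0 then 1 else 0 := by
  simp only [heatKernel, wordProb, wordExpect_zero, displacement_nil, eq_comm]
  congr

lemma heatKernel_succ (t : ℕ) (x : V d) :
    heatKernel (t + 1) x = 𝔼 s : Step d, heatKernel t (x - stepVec s) := by
  simp only [heatKernel, wordProb, wordExpect_succ, displacement_cons, eq_sub_iff_add_eq']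

lemma prod_walkProb_cons (c : Fin d → ℕ) (i : Fin d) (x : V d) :
    ∏ j, walkProb ((c + Pi.single i 1 : Fin d → ℕ) j) (x j) =
      (∏ j, walkProb (c j) ((x - stepVec (i, true)) j) +
        ∏ j, walkProb (c j) ((x - stepVec (i, false)) j)) / 2 := by
  have hoff : ∀ (c' : Fin d → ℕ) (y : V d), (∀ j ≠ i, c' j = c j) → (∀ j ≠ i, y j = x j) →
      ∏ j, walkProb (c' j) (y j) =
        walkProb (c' i) (y i) * ∏ j ∈ Finset.univ.erase i, walkProb (c j) (x j) := by
    intro c' y hc hy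
    rw [← Finset.mul_prod_erase _ _ (Finset.mem_univ i)]
    congr 1
    exact Finset.prod_congr rfl fun j hj => by
      rw [hc j (Finset.ne_of_mem_erase hj), hy j (Finset.ne_of_mem_erase hj)]
  rw [hoff _ x (fun j hj => by simp [hj]) fun _ _ => rfl,
    hoff c _ (fun _ _ => rfl) fun j hj => by simp [stepVec, hj],
    hoff c _ (fun _ _ => rfl) fun j hj => by simp [stepVec, hj]]
  simp [stepVec, walkProb]
  ring

/-- Given how many steps are taken in each direction, the coordinates are independent walks. -/
lemma heatKernel_eq_wordExpect_prod (t : ℕ) (x : V d) :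
    heatKernel t x =
      wordExpect t fun l : List (Fin d) => ∏ i, walkProb (letterCount l i) (x i) := by
  induction t generalizing x with
  | zero => simp [heatKernel_zero, wordExpect_zero, letterCount_nil, walkProb,
      Finset.prod_ite_zero, funext_iff]
  | succ t ih =>
    rw [heatKernel_succ, wordExpect_succ, ← Finset.univ_product_univ, Finset.expect_product]
    refine Finset.expect_congr rfl fun i _ => ?_
    simp only [letterCount_cons, prod_walkProb_cons, ih]
    simp only [div_eq_inv_mul, wordExpect_const_mul, wordExpect_add,
      Fintype.expect_eq_sum_div_card, Fintype.sum_bool, Fintype.card_bool]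
    norm_num

lemma sq_heatKernel_le [NeZero d] (t : ℕ) (x : V d) :
    heatKernel t x ^ 2 ≤ (d / ((t : ℝ) + 1)) ^ d :=
  calc heatKernel t x ^ 2
      ≤ wordExpect t fun l : List (Fin d) => (∏ i, walkProb (letterCount l i) (x i)) ^ 2 := by
        rw [heatKernel_eq_wordExpect_prod]; exact sq_wordExpect_le t _
    _ ≤ wordExpect t fun l : List (Fin d) => ∏ i, (1 / ((letterCount l i : ℝ) + 1)) := by
        refine wordExpect_mono fun l _ => ?_
        rw [← Finset.prod_pow]
        exact Finset.prod_le_prod (fun _ _ => sq_nonneg _) fun _ _ => walkProb_sq_le _ _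
    _ ≤ (d / ((t : ℝ) + 1)) ^ d := by
        simpa using wordExpect_prod_one_div_le (Finset.univ : Finset (Fin d)) t

/-- The uniform bound `(d / (t + 1)) ^ (d / 2)` on the heat kernel at time `t`. -/
noncomputable def heatBound (d t : ℕ) : ℝ := √((d / ((t : ℝ) + 1)) ^ d)

lemma heatBound_nonneg (d t : ℕ) : 0 ≤ heatBound d t := Real.sqrt_nonneg _

lemma heatKernel_le_heatBound [NeZero d] (t : ℕ) (x : V d) : heatKernel t x ≤ heatBound d t :=
  Real.le_sqrt_of_sq_le (sq_heatKernel_le t x)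

lemma summable_mul_heatBound (hd : 5 ≤ d) :
    Summable fun t : ℕ => ((t : ℝ) + 1) * heatBound d t := by
  have hs : Summable fun t : ℕ => √((d : ℝ) ^ d) * (1 / ((t : ℝ) + 1) ^ (3 / 2 : ℝ)) := by
    have h := (Real.summable_one_div_nat_rpow (p := 3 / 2)).2 (by norm_num)
    exact ((summable_nat_add_iff 1).2 h).mul_left _ |>.congr fun t => by push_cast; rfl
  refine hs.of_nonneg_of_le (fun t => mul_nonneg (by positivity) (heatBound_nonneg d t)) fun t => ?_
  have hpos : (0 : ℝ) < (t : ℝ) + 1 := by positivity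
  have hexp : ((t : ℝ) + 1) * ((t : ℝ) + 1) ^ (3 / 2 : ℝ) ≤ √(((t : ℝ) + 1) ^ d) := by
    rw [Real.sqrt_eq_rpow, ← Real.rpow_natCast, ← Real.rpow_mul hpos.le,
      ← Real.rpow_one_add' hpos.le (by norm_num)]
    have : (5 : ℝ) ≤ d := by exact_mod_cast hd
    exact Real.rpow_le_rpow_of_exponent_le (by simp) (by linarith)
  rw [heatBound, div_pow, Real.sqrt_div (by positivity), mul_one_div, mul_div_left_comm]
  refine mul_le_mul_of_nonneg_left ?_ (Real.sqrt_nonneg _)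
  rw [div_le_iff₀ (by positivity), inv_mul_eq_div, le_div_iff₀ (by positivity)]
  exact hexp

end HeatKernel

section EraseLoop

variable {α : Type*} [DecidableEq α]

/-- One step of chronological loop erasure. Paths are lists with the most recent vertex at the
head; moving to `u` erases the loop closed at `u`, if there is one. -/
def eraseLoop (η : List α) (u : α) : List α :=
  if u ∈ η then η.dropWhile (· ≠ u) else u :: η

lemma eraseLoop_of_notMem {η : List α} {u : α} (hu : u ∉ η) : eraseLoop η u = u :: η :=
  if_neg hu

lemma eraseLoop_append_cons {A B : List α} {u : α} (hu : u ∉ A) :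
    eraseLoop (A ++ u :: B) u = u :: B := by
  rw [eraseLoop, if_pos (by simp), List.dropWhile_append_of_pos, List.dropWhile_cons_of_neg]
  · simp
  · exact fun a ha => decide_eq_true (ne_of_mem_of_not_mem ha hu)

lemma eraseLoop_cases (η : List α) (u : α) :
    (u ∉ η ∧ eraseLoop η u = u :: η) ∨
      ∃ A B, η = A ++ u :: B ∧ u ∉ A ∧ eraseLoop η u = u :: B := by
  by_cases h : u ∈ η
  · obtain ⟨A, B, rfl, hA⟩ := List.eq_append_cons_of_mem h
    exact Or.inr ⟨A, B, rfl, hA, eraseLoop_append_cons hA⟩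
  · exact Or.inl ⟨h, eraseLoop_of_notMem h⟩

lemma exists_eraseLoop_eq_cons (η : List α) (u : α) : ∃ B, eraseLoop η u = u :: B := by
  rcases eraseLoop_cases η u with ⟨-, h⟩ | ⟨A, B, -, -, h⟩ <;> exact ⟨_, h⟩

lemma mem_or_eq_of_mem_eraseLoop {η : List α} {u y : α} (h : y ∈ eraseLoop η u) :
    y = u ∨ y ∈ η := by
  rcases eraseLoop_cases η u with ⟨-, he⟩ | ⟨A, B, rfl, -, he⟩ <;> rw [he] at h <;> grind

/-- A suffix `L` whose proper vertices are avoided survives; the old part `O` of the path can only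
shrink, and whatever precedes it is new. -/
lemma exists_eraseLoop_append_eq {N O L : List α} {u : α} (hLO : L <:+ O) (hu : u ∉ L.tail) :
    ∃ N' O', eraseLoop (N ++ O) u = N' ++ O' ∧ O' <:+ O ∧ L <:+ O' := by
  rcases eraseLoop_cases (N ++ O) u with ⟨-, he⟩ | ⟨A, B, hAB, -, he⟩
  · exact ⟨u :: N, O, he, List.suffix_refl O, hLO⟩
  rw [he]
  rcases List.append_eq_append_iff.1 hAB with ⟨C, -, rfl⟩ | ⟨C, rfl, hC⟩
  · refine ⟨[], u :: B, rfl, List.suffix_append _ _, ?_⟩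
    obtain ⟨D, hD⟩ := hLO
    rcases List.append_eq_append_iff.1 hD with ⟨E, -, hE⟩ | ⟨E, -, hE⟩
    · cases E with
      | nil => exact hE ▸ List.suffix_refl _
      | cons e E => simp [hE] at hu
    · exact ⟨E, hE.symm⟩
  · cases C with
    | nil => exact ⟨[], O, by simpa using hC, List.suffix_refl O, hLO⟩
    | cons c C =>
      obtain ⟨rfl, rfl⟩ := List.cons.inj hC
      exact ⟨u :: C, O, rfl, List.suffix_refl O, hLO⟩

end EraseLoop

section SeparatedBlocks

variable {α : Type*}

/-- The vertices visited by `S` up to time `j * m` are not visited again between the times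
`(j + 1) * m` and `T`. -/
def IsSeparatedBlock (T m : ℕ) (S : ℕ → α) (j : ℕ) : Prop :=
  ∀ i k, i ≤ j * m → (j + 1) * m ≤ k → k ≤ T → S i ≠ S k

variable [DecidableEq α]

/-- Up to time `T`, the path `σ i` is the loop erasure of `σ 0` followed by `S 1, …, S i`. -/
def IsLoopErasure (T : ℕ) (S : ℕ → α) (σ : ℕ → List α) : Prop :=
  ∀ i < T, σ (i + 1) = eraseLoop (σ i) (S (i + 1))

/-- `L` is a suffix of the loop erasure at time `a` which survives up to time `T` because its
vertices, except possibly its head, are not visited in between. -/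
structure IsProtectedSuffix (T : ℕ) (S : ℕ → α) (σ : ℕ → List α) (a : ℕ) (L : List α) :
    Prop where
  suffix : L <:+ σ a
  notMem : ∀ k, a < k → k ≤ T → S k ∉ L.tail

variable {T m J : ℕ} {S : ℕ → α} {σ : ℕ → List α}

lemma IsLoopErasure.mem_or_exists_eq (hσ : IsLoopErasure T S σ) {i : ℕ} (hi : i ≤ T) {y : α}
    (hy : y ∈ σ i) :
    y ∈ σ 0 ∨ ∃ j ≤ i, y = S j := by
  induction i with
  | zero => exact Or.inl hy
  | succ i ih =>
    rw [hσ i hi] at hy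
    rcases mem_or_eq_of_mem_eraseLoop hy with rfl | hy
    · exact Or.inr ⟨i + 1, le_rfl, rfl⟩
    · exact (ih (by omega) hy).imp_right fun ⟨j, hj, h⟩ => ⟨j, by omega, h⟩

lemma IsProtectedSuffix.exists_append (hσ : IsLoopErasure T S σ) {a : ℕ} {L : List α}
    (hL : IsProtectedSuffix T S σ a L) {i : ℕ} (hi : a + i ≤ T) :
    ∃ N O, σ (a + i) = N ++ O ∧ O <:+ σ a ∧ L <:+ O := by
  induction i with
  | zero => exact ⟨[], σ a, rfl, List.suffix_refl _, hL.suffix⟩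
  | succ i ih =>
    obtain ⟨N, O, hNO, hOa, hLO⟩ := ih (by omega)
    obtain ⟨N', O', he, hO', hLO'⟩ :=
      exists_eraseLoop_append_eq (N := N) hLO (hL.notMem (a + i + 1) (by omega) hi)
    exact ⟨N', O', by rw [← add_assoc, hσ (a + i) (by omega), hNO, he], hO'.trans hOa, hLO'⟩

lemma IsProtectedSuffix.mono (hσ : IsLoopErasure T S σ) {a b : ℕ} {L : List α}
    (hL : IsProtectedSuffix T S σ a L) (hab : a ≤ b) (hb : b ≤ T) :
    IsProtectedSuffix T S σ b L := by
  obtain ⟨i, rfl⟩ := Nat.exists_eq_add_of_le hab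
  obtain ⟨N, O, hNO, -, hLO⟩ := hL.exists_append hσ hb
  exact ⟨hNO ▸ hLO.trans (List.suffix_append N O), fun k hk => hL.notMem k (by omega)⟩

lemma IsLoopErasure.mem_self (hσ : IsLoopErasure T S σ) {i : ℕ} (hi : 0 < i) (hiT : i ≤ T) :
    S i ∈ σ i := by
  obtain ⟨i, rfl⟩ := Nat.exists_eq_succ_of_ne_zero hi.ne'
  obtain ⟨B, hB⟩ := exists_eraseLoop_eq_cons (σ i) (S (i + 1))
  simp [hσ i hiT, hB]

/-- During a separated block the path grows by a vertex that is never erased afterwards. -/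
lemma IsProtectedSuffix.exists_length_lt (hσ : IsLoopErasure T S σ) (hm : 0 < m) {j : ℕ}
    (hj : (j + 1) * m ≤ T) (hout : ∀ k, (j + 1) * m ≤ k → k ≤ T → S k ∉ σ 0)
    (hsep : IsSeparatedBlock T m S j) {L : List α} (hL : IsProtectedSuffix T S σ (j * m) L) :
    ∃ L', IsProtectedSuffix T S σ ((j + 1) * m) L' ∧ L.length < L'.length := by
  have hjm : (j + 1) * m = j * m + m := Nat.succ_mul j m
  obtain ⟨N, O, hNO, hOσ, hLO⟩ := hL.exists_append hσ (hjm ▸ hj)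
  rw [← hjm] at hNO
  have hO : ∀ k, (j + 1) * m ≤ k → k ≤ T → S k ∉ O := by
    intro k hk hkT hmem
    rcases hσ.mem_or_exists_eq (by omega) (hOσ.subset hmem) with h | ⟨i, hi, h⟩
    · exact hout k hk hkT h
    · exact hsep i k hi hk hkT h.symm
  have hN : N ≠ [] := by
    rintro rfl
    have hmem := hσ.mem_self (show 0 < (j + 1) * m by omega) hj
    exact hO _ le_rfl hj (by rwa [hNO] at hmem)
  refine ⟨N.getLast hN :: O, ⟨⟨N.dropLast, ?_⟩, fun k hk => hO k hk.le⟩, ?_⟩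
  · rw [hNO, List.append_cons, List.dropLast_append_getLast]
  · exact Nat.lt_succ_of_le hLO.length_le

lemma exists_isProtectedSuffix (hσ : IsLoopErasure T S σ) (hm : 0 < m)
    (hout : ∀ k, J * m ≤ k → k ≤ T → S k ∉ σ 0) {j : ℕ} (hJj : J ≤ j) (hj : j * m ≤ T) :
    ∃ L, IsProtectedSuffix T S σ (j * m) L ∧
      ((Finset.Ico J j).filter (IsSeparatedBlock T m S)).card ≤ L.length := by
  induction j, hJj using Nat.le_induction with
  | base => exact ⟨[], ⟨List.nil_suffix, by simp⟩, by simp⟩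
  | succ j hJj ih =>
    have hle : j * m ≤ (j + 1) * m := Nat.mul_le_mul_right m j.le_succ
    obtain ⟨L, hL, hcard⟩ := ih (hle.trans hj)
    rw [Nat.Ico_succ_right_eq_insert_Ico hJj, Finset.filter_insert]
    split_ifs with hsep
    · obtain ⟨L', hL', hlt⟩ := hL.exists_length_lt hσ hm hj
        (fun k hk => hout k ((Nat.mul_le_mul_right m (by omega)).trans hk)) hsep
      exact ⟨L', hL', (Finset.card_insert_le _ _).trans (by omega)⟩
    · exact ⟨L, hL.mono hσ hle hj, hcard⟩

lemma card_isSeparatedBlock_le_length (hσ : IsLoopErasure T S σ) (hm : 0 < m)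
    (hout : ∀ k, J * m ≤ k → k ≤ T → S k ∉ σ 0) {j i : ℕ} (hJj : J ≤ j) (hji : j * m ≤ i)
    (hi : i ≤ T) :
    ((Finset.Ico J j).filter (IsSeparatedBlock T m S)).card ≤ (σ i).length := by
  obtain ⟨L, hL, hcard⟩ := exists_isProtectedSuffix hσ hm hout hJj (hji.trans hi)
  exact hcard.trans (hL.mono hσ hji hi).suffix.length_le

end SeparatedBlocks

section Occupation

variable {X S : Type*} [Fintype S]

/-- Expected number of visits to `A` before time `T` by the chain started at `x` which applies
`step` to independent uniform letters. -/
noncomputable def occupation (step : X → S → X) (A : Set X) : ℕ → X → ℝ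
  | 0, _ => 0
  | T + 1, x => A.indicator 1 x + 𝔼 s, occupation step A T (step x s)

/-- Driven by the word `l`, the chain started at `x` visits `A` at some time at least `R`. -/
def VisitsAfter (step : X → S → X) (A : Set X) (x : X) (R : ℕ) (l : List S) : Prop :=
  ∃ i, R ≤ i ∧ i ≤ l.length ∧ (l.take i).foldl step x ∈ A

/-- Probability that the chain started at `x` visits `A` up to time `T`. -/
noncomputable def hitProb (step : X → S → X) (A : Set X) (T : ℕ) (x : X) : ℝ :=
  wordProb T (VisitsAfter step A x 0)

variable {step : X → S → X} {A : Set X}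

lemma occupation_nonneg (T : ℕ) (x : X) : 0 ≤ occupation step A T x := by
  induction T generalizing x with
  | zero => exact le_rfl
  | succ T ih =>
    exact add_nonneg (Set.indicator_nonneg (fun _ _ => zero_le_one) x)
      (Finset.expect_nonneg fun s _ => ih _)

lemma monotone_occupation (x : X) : Monotone fun T => occupation step A T x := by
  refine monotone_nat_of_le_succ fun T => ?_
  induction T generalizing x with
  | zero => exact occupation_nonneg 1 x
  | succ T ih => exact add_le_add_right (Finset.expect_le_expect fun s _ => ih _) _

lemma indicator_one_le_one (A : Set X) (x : X) : A.indicator (1 : X → ℝ) x ≤ 1 :=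
  Set.indicator_apply_le' (fun _ => le_rfl) fun _ => zero_le_one

lemma hitProb_succ_of_notMem (T : ℕ) {x : X} (hx : x ∉ A) :
    hitProb step A (T + 1) x = 𝔼 s, hitProb step A T (step x s) := by
  have hshift : ∀ s l, VisitsAfter step A x 0 (s :: l) ↔ VisitsAfter step A (step x s) 0 l := by
    refine fun s l => ⟨?_, fun ⟨i, _, hil, hi⟩ => ⟨i + 1, Nat.zero_le _, by simpa using hil, hi⟩⟩
    rintro ⟨_ | i, _, hil, hi⟩
    · exact absurd hi hx
    · exact ⟨i, Nat.zero_le _, by simpa using hil, hi⟩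
  simp only [hitProb, wordProb, wordExpect_succ, hshift]

lemma wordExpect_hitProb_le (T R : ℕ) (x : X) :
    wordExpect R (fun l => hitProb step A T (l.foldl step x)) ≤
      wordProb (R + T) (VisitsAfter step A x R) := by
  rw [wordProb, wordExpect_append]
  refine wordExpect_mono fun l hl => wordProb_mono fun l' _ ⟨i, _, hil, hi⟩ => ?_
  refine ⟨R + i, Nat.le_add_right R i, by simpa [hl] using hil, ?_⟩
  rwa [← hl, List.take_length_add_append, List.foldl_append]

variable [Nonempty S]

lemma occupation_add_le (T R : ℕ) (x : X) :
    occupation step A (T + R) x ≤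
      R + wordExpect R fun l => occupation step A T (l.foldl step x) := by
  induction R generalizing x with
  | zero => simp [wordExpect_zero]
  | succ R ih =>
    calc occupation step A (T + R + 1) x
        ≤ 1 + 𝔼 s, (R + wordExpect R fun l => occupation step A T (l.foldl step (step x s))) :=
          add_le_add (indicator_one_le_one A x) (Finset.expect_le_expect fun s _ => ih _)
      _ = (R + 1 : ℕ) + wordExpect (R + 1) fun l => occupation step A T (l.foldl step x) := by
          rw [Finset.expect_add_distrib, Fintype.expect_const, wordExpect_succ]
          push_cast [List.foldl_cons]
          ring

lemma hitProb_of_mem (T : ℕ) {x : X} (hx : x ∈ A) : hitProb step A T x = 1 := by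
  refine (wordExpect_congr fun l _ => if_pos ?_).trans (wordExpect_const T 1)
  exact ⟨0, le_rfl, Nat.zero_le _, hx⟩

/-- If a return to `A` after time `R` has probability at most `1 / 2` from every point of `A`, the
visits to `A` come in at most two rounds of length `R` on average. -/
lemma occupation_le {R : ℕ} (hR : 0 < R)
    (hret : ∀ T, ∀ x ∈ A, wordProb T (VisitsAfter step A x R) ≤ 1 / 2) (T : ℕ) (x : X) :
    occupation step A T x ≤ 2 * R * hitProb step A T x := by
  induction T using Nat.strong_induction_on generalizing x with
  | _ T ih =>
  by_cases hx : x ∈ A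
  · rw [hitProb_of_mem T hx, mul_one]
    rcases lt_or_ge T R with hT | hT
    · have hocc := occupation_add_le (step := step) (A := A) 0 T x
      simp only [occupation, wordExpect_const, zero_add, add_zero] at hocc
      have : (T : ℝ) ≤ R := by exact_mod_cast hT.le
      linarith
    · obtain ⟨T', rfl⟩ := Nat.exists_eq_add_of_le' hT
      have hlate : wordExpect R (fun l => occupation step A T' (l.foldl step x)) ≤ R :=
        calc wordExpect R (fun l => occupation step A T' (l.foldl step x))
            ≤ wordExpect R fun l => 2 * R * hitProb step A T' (l.foldl step x) :=
              wordExpect_mono fun l _ => ih T' (by omega) _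
          _ ≤ 2 * R * (1 / 2) := by
              rw [wordExpect_const_mul]
              gcongr
              exact (wordExpect_hitProb_le T' R x).trans (hret _ x hx)
          _ = R := by ring
      linarith [occupation_add_le (step := step) (A := A) T' R x]
  · cases T with
    | zero => exact mul_nonneg (by positivity) (wordProb_nonneg _ _)
    | succ T =>
      rw [occupation, Set.indicator_of_notMem hx, zero_add, hitProb_succ_of_notMem T hx,
        Finset.mul_expect]
      exact Finset.expect_le_expect fun s _ => ih T T.lt_succ_self _

lemma exists_supersolution {R : ℕ} (hR : 0 < R)
    (hret : ∀ T, ∀ x ∈ A, wordProb T (VisitsAfter step A x R) ≤ 1 / 2) :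
    ∃ f : X → ℝ, (∀ x, 0 ≤ f x) ∧ (∀ x, f x ≤ 2 * R) ∧
      ∀ x, A.indicator 1 x + 𝔼 s, f (step x s) ≤ f x := by
  have hle : ∀ T x, occupation step A T x ≤ 2 * R := fun T x =>
    (occupation_le hR hret T x).trans
      (mul_le_of_le_one_right (by positivity) (wordProb_le_one T _))
  have hbdd : ∀ x, BddAbove (Set.range fun T => occupation step A T x) := fun x =>
    ⟨_, Set.forall_mem_range.2 fun T => hle T x⟩
  refine ⟨fun x => ⨆ T, occupation step A T x, fun x => le_ciSup (hbdd x) 0,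
    fun x => ciSup_le fun T => hle T x, fun x => ?_⟩
  have hlim : Filter.Tendsto (fun T => occupation step A (T + 1) x) Filter.atTop
      (nhds (A.indicator 1 x + 𝔼 s, ⨆ T, occupation step A T (step x s))) := by
    simp only [occupation, Fintype.expect_eq_sum_div_card]
    exact ((tendsto_finsetSum _ fun s _ =>
      tendsto_atTop_ciSup (monotone_occupation (step x s)) (hbdd _)).div_const _).const_add _
  exact le_of_tendsto' hlim fun T => le_ciSup (hbdd x) (T + 1)

end Occupation

section ErasedWalk

/-- Position after `i` steps of the walk from `x` with the increments `l`. -/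
def walk (x : V d) (l : List (Step d)) (i : ℕ) : V d := x + displacement (l.take i)

/-- Extends a path by one step from its most recent vertex (its head) and erases the loop this
creates. The default vertex for the empty path is irrelevant. -/
def eraseStep (η : List (V d)) (s : Step d) : List (V d) := eraseLoop η (η.headD 0 + stepVec s)

lemma headD_foldl_eraseStep (η : List (V d)) (l : List (Step d)) :
    (l.foldl eraseStep η).headD 0 = η.headD 0 + displacement l := by
  induction l generalizing η with
  | nil => simp
  | cons s l ih =>
    obtain ⟨B, hB⟩ := exists_eraseLoop_eq_cons η (η.headD 0 + stepVec s)
    rw [List.foldl_cons, ih, eraseStep, hB, List.headD_cons, displacement_cons, add_assoc]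

lemma isLoopErasure_foldl_eraseStep (η : List (V d)) (l : List (Step d)) :
    IsLoopErasure l.length (walk (η.headD 0) l) fun i => (l.take i).foldl eraseStep η := by
  intro i hi
  simp only [List.take_succ_eq_append_getElem hi, List.foldl_append, List.foldl_cons,
    List.foldl_nil, walk, displacement_append, displacement_cons, displacement_nil, add_zero,
    ← add_assoc, ← headD_foldl_eraseStep]
  rfl

lemma walk_append_length_add (x : V d) (l l' : List (Step d)) (i : ℕ) :
    walk x (l ++ l') (l.length + i) = walk (x + displacement l) l' i := by
  simp only [walk, List.take_length_add_append, displacement_append, add_assoc]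

lemma wordProb_walk_eq [NeZero d] {T k : ℕ} (hk : k ≤ T) (x v : V d) :
    wordProb T (fun l => walk x l k = v) = heatKernel k (v - x) := by
  obtain ⟨b, rfl⟩ := Nat.exists_eq_add_of_le hk
  rw [wordProb, wordExpect_append, heatKernel, wordProb]
  refine wordExpect_congr fun l hl => ?_
  simp only [walk, ← hl, List.take_left, wordExpect_const, eq_sub_iff_add_eq']

lemma wordProb_walk_eq_walk [NeZero d] {T i k : ℕ} (hi : i ≤ k) (hk : k ≤ T) (x : V d) :
    wordProb T (fun l => walk x l i = walk x l k) = heatKernel (k - i) (0 : V d) := by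
  obtain ⟨b, rfl⟩ := Nat.exists_eq_add_of_le hi
  obtain ⟨c, rfl⟩ := Nat.exists_eq_add_of_le hk
  have hfirst : ∀ l : List (Step d), l.length = i →
      wordProb (b + c) (fun l' => walk x (l ++ l') i = walk x (l ++ l') (i + b)) =
        heatKernel b (0 : V d) := by
    rintro l rfl
    have hstart (l' : List (Step d)) :
        walk x (l ++ l') l.length = walk (x + displacement l) l' 0 :=
      walk_append_length_add x l l' 0
    simp only [hstart, walk_append_length_add, eq_comm (a := walk _ _ 0)]
    simpa [walk] using wordProb_walk_eq (Nat.le_add_right b c) (x + displacement l)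
      (x + displacement l)
  rw [wordProb, add_assoc, wordExpect_append, Nat.add_sub_cancel_left]
  exact (wordExpect_congr hfirst).trans (wordExpect_const i _)

/-- The tail `∑_{t ≥ a} (t + 1) * heatBound d t` of the series bounding the number of times two
independent walk segments meet. -/
noncomputable def heatTail (d a : ℕ) : ℝ :=
  ∑' t : ℕ, (((t + a : ℕ) : ℝ) + 1) * heatBound d (t + a)

lemma tendsto_heatTail (d : ℕ) : Filter.Tendsto (heatTail d) Filter.atTop (nhds 0) :=
  tendsto_sum_nat_add fun t => ((t : ℝ) + 1) * heatBound d t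

lemma sum_Ico_le_heatTail (hd : 5 ≤ d) (a b : ℕ) :
    ∑ t ∈ Finset.Ico a b, ((t : ℝ) + 1) * heatBound d t ≤ heatTail d a := by
  rw [Finset.sum_Ico_eq_sum_range]
  simp only [add_comm a]
  exact ((summable_nat_add_iff a).2 (summable_mul_heatBound hd)).sum_le_tsum _ fun t _ =>
    mul_nonneg (by positivity) (heatBound_nonneg _ _)

lemma sum_product_sub_le {g : ℕ → ℝ} (hg : ∀ t, 0 ≤ g t) (a m b : ℕ) :
    ∑ p ∈ Finset.range (a + 1) ×ˢ Finset.Ico (a + m) b, g (p.2 - p.1) ≤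
      ∑ t ∈ Finset.Ico m b, ((t : ℝ) + 1) * g t := by
  have hmaps : ∀ p ∈ Finset.range (a + 1) ×ˢ Finset.Ico (a + m) b, p.2 - p.1 ∈ Finset.Ico m b := by
    simp only [Finset.mem_product, Finset.mem_range, Finset.mem_Ico]
    omega
  rw [← Finset.sum_fiberwise_of_maps_to hmaps]
  refine Finset.sum_le_sum fun t _ => ?_
  rw [Finset.sum_congr rfl fun p hp => congrArg g (Finset.mem_filter.1 hp).2, Finset.sum_const,
    nsmul_eq_mul]
  refine mul_le_mul_of_nonneg_right ?_ (hg t)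
  rw [← Nat.cast_add_one, Nat.cast_le, ← Finset.card_range (t + 1)]
  refine Finset.card_le_card_of_injOn (fun p => a - p.1) ?_ ?_
  · intro p hp
    simp only [Finset.coe_filter, Finset.mem_product, Finset.mem_range, Finset.mem_Ico,
      Set.mem_ofPred_eq, Finset.coe_range, Set.mem_Iio] at hp ⊢
    omega
  · intro p hp q hq hpq
    simp only [Finset.coe_filter, Finset.mem_product, Finset.mem_range, Finset.mem_Ico,
      Set.mem_ofPred_eq] at hp hq hpq
    ext <;> omega

lemma wordProb_not_isSeparatedBlock_le (hd : 5 ≤ d) (T m j : ℕ) (x : V d) :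
    wordProb T (fun l => ¬ IsSeparatedBlock T m (walk x l) j) ≤ heatTail d m := by
  have : NeZero d := ⟨by omega⟩
  calc wordProb T (fun l => ¬ IsSeparatedBlock T m (walk x l) j)
      ≤ wordProb T fun l => ∃ p ∈ Finset.range (j * m + 1) ×ˢ Finset.Ico (j * m + m) (T + 1),
          walk x l p.1 = walk x l p.2 := by
        refine wordProb_mono fun l _ h => ?_
        simp only [IsSeparatedBlock, not_forall, not_not] at h
        obtain ⟨i, k, hi, hk, hkT, hik⟩ := h
        rw [Nat.succ_mul] at hk
        exact ⟨(i, k), by simp only [Finset.mem_product, Finset.mem_range, Finset.mem_Ico]; omega,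
          hik⟩
    _ ≤ ∑ p ∈ Finset.range (j * m + 1) ×ˢ Finset.Ico (j * m + m) (T + 1),
          heatBound d (p.2 - p.1) := by
        refine (wordProb_exists_le T _ _).trans (Finset.sum_le_sum fun p hp => ?_)
        simp only [Finset.mem_product, Finset.mem_range, Finset.mem_Ico] at hp
        rw [wordProb_walk_eq_walk (by omega) (by omega)]
        exact heatKernel_le_heatBound _ _
    _ ≤ heatTail d m :=
        (sum_product_sub_le (heatBound_nonneg d) _ _ _).trans (sum_Ico_le_heatTail hd _ _)

lemma wordProb_exists_walk_mem_le (hd : 5 ≤ d) (T : ℕ) {a : ℕ} (x : V d) {η : List (V d)}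
    (hη : η.length ≤ a) :
    wordProb T (fun l => ∃ k ∈ Finset.Ico a (T + 1), walk x l k ∈ η) ≤ heatTail d a := by
  have : NeZero d := ⟨by omega⟩
  refine (wordProb_exists_le T _ _).trans ((Finset.sum_le_sum fun k hk => ?_).trans
    (sum_Ico_le_heatTail hd a (T + 1)))
  rw [Finset.mem_Ico] at hk
  have hmem (l : List (Step d)) : walk x l k ∈ η ↔ ∃ v ∈ η.toFinset, walk x l k = v := by simp
  have hcard : (η.toFinset.card : ℝ) ≤ k + 1 := by
    exact_mod_cast (η.toFinset_card_le.trans hη).trans (by omega)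
  calc wordProb T (fun l => walk x l k ∈ η)
      ≤ ∑ v ∈ η.toFinset, wordProb T fun l => walk x l k = v := by
        simp only [hmem]
        exact wordProb_exists_le T _ _
    _ ≤ ∑ _v ∈ η.toFinset, heatBound d k := by
        refine Finset.sum_le_sum fun v _ => ?_
        rw [wordProb_walk_eq (by omega)]
        exact heatKernel_le_heatBound _ _
    _ ≤ ((k : ℝ) + 1) * heatBound d k := by
        rw [Finset.sum_const, nsmul_eq_mul]
        exact mul_le_mul_of_nonneg_right hcard (heatBound_nonneg d k)

lemma VisitsAfter.exists_walk_mem_or_le_card {n m J : ℕ} (hm : 0 < m) {η : List (V d)}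
    {l : List (Step d)} (h : VisitsAfter eraseStep {ξ | ξ.length ≤ n} η (2 * J * m) l) :
    (∃ k ∈ Finset.Ico (J * m) (l.length + 1), walk (η.headD 0) l k ∈ η) ∨
      J ≤ n + ((Finset.Ico J (2 * J)).filter fun j =>
        ¬ IsSeparatedBlock l.length m (walk (η.headD 0) l) j).card := by
  rw [or_iff_not_imp_left]
  intro havoid
  obtain ⟨i, hRi, hil, hi⟩ := h
  have hlen := (card_isSeparatedBlock_le_length (isLoopErasure_foldl_eraseStep η l) hm
    (fun k hk hkl hmem => havoid ⟨k, Finset.mem_Ico.2 ⟨hk, by omega⟩, hmem⟩)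
    (show J ≤ 2 * J by omega) hRi hil).trans hi
  have htotal := (Finset.Ico J (2 * J)).card_filter_add_card_filter_not
    (IsSeparatedBlock l.length m (walk (η.headD 0) l))
  rw [Nat.card_Ico] at htotal
  omega

lemma wordProb_visitsAfter_le (hd : 5 ≤ d) {n m : ℕ} (hm : 0 < m) (T : ℕ) {η : List (V d)}
    (hη : η.length ≤ n) :
    wordProb T (VisitsAfter eraseStep {ξ | ξ.length ≤ n} η (2 * (2 * (n + 1)) * m)) ≤
      heatTail d (2 * (n + 1) * m) + 2 * heatTail d m := by
  set J := 2 * (n + 1) with hJ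
  have hmarkov := mul_wordProb_le_card_filter_le T (n + 1 : ℝ) (Finset.Ico J (2 * J))
    fun j l => ¬ IsSeparatedBlock T m (walk (η.headD 0) l) j
  have hsum := (hmarkov.trans (Finset.sum_le_card_nsmul _ _ _ fun j _ =>
    wordProb_not_isSeparatedBlock_le hd T m j (η.headD 0)))
  have hcard : ((Finset.Ico J (2 * J)).card : ℝ) = 2 * (n + 1) := by
    rw [Nat.card_Ico, two_mul, Nat.add_sub_cancel, hJ]
    push_cast
    ring
  rw [nsmul_eq_mul, hcard, mul_comm (2 : ℝ), mul_assoc,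
    mul_le_mul_iff_of_pos_left (by positivity)] at hsum
  have hlen : η.length ≤ J * m := by nlinarith
  refine (wordProb_mono fun l hl h => ?_).trans ((wordProb_or_le T _ _).trans
    (add_le_add (wordProb_exists_walk_mem_le hd T (η.headD 0) hlen) hsum))
  subst hl
  refine (h.exists_walk_mem_or_le_card hm).imp_right fun hJn => ?_
  exact_mod_cast (show n + 1 ≤ _ by omega)

/-- A potential on paths which pays for the expected time the loop-erased walk spends having at
most `n` vertices. -/
lemma exists_loopErasure_supersolution (hd : 5 ≤ d) :
    ∃ C : ℝ, 0 < C ∧ ∀ n : ℕ, 1 ≤ n → ∃ f : List (V d) → ℝ, (∀ η, 0 ≤ f η) ∧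
      (∀ η, f η ≤ C * n) ∧
      ∀ η, {ξ : List (V d) | ξ.length ≤ n}.indicator 1 η + 𝔼 s, f (eraseStep η s) ≤ f η := by
  have : NeZero d := ⟨by omega⟩
  obtain ⟨m, hm⟩ := Filter.eventually_atTop.1
    ((tendsto_heatTail d).eventually_le_const (show (0 : ℝ) < 1 / 6 by norm_num))
  refine ⟨16 * (m + 1 : ℕ), by positivity, fun n hn => ?_⟩
  obtain ⟨f, hf0, hfle, hf⟩ := exists_supersolution
    (step := eraseStep (d := d)) (A := {ξ | ξ.length ≤ n}) (R := 2 * (2 * (n + 1)) * (m + 1))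
    (by positivity) fun T η hη => by
      have hreturn := wordProb_visitsAfter_le hd m.succ_pos T hη
      have hlate := hm (2 * (n + 1) * (m + 1)) (by nlinarith)
      have hblock := hm (m + 1) m.le_succ
      linarith
  refine ⟨f, hf0, fun η => (hfle η).trans ?_, hf⟩
  have hn' : (1 : ℝ) ≤ n := by exact_mod_cast hn
  push_cast
  nlinarith [m.cast_nonneg (α := ℝ)]

end ErasedWalk

section ParentMap

variable {α : Type*} {G : SimpleGraph α} {A : Finset α} {p q : α → α} {x u : α}

/-- `p` encodes a spanning forest of `A` rooted outside `A`: it maps each vertex of `A` to a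
neighbour, its parent, and fixes the other vertices, and every orbit leaves `A`. -/
structure IsParentMap (G : SimpleGraph α) (A : Finset α) (p : α → α) : Prop where
  adj : ∀ x ∈ A, G.Adj x (p x)
  apply_eq : ∀ x ∉ A, p x = x
  exists_iterate_notMem : ∀ x, ∃ k, p^[k] x ∉ A

lemma iterate_eq_iterate_of_forall_lt {k : ℕ} (h : ∀ j < k, q (p^[j] x) = p (p^[j] x)) :
    q^[k] x = p^[k] x := by
  induction k with
  | zero => rfl
  | succ k ih =>
    rw [Function.iterate_succ_apply', Function.iterate_succ_apply',
      ih fun j hj => h j (hj.trans k.lt_succ_self), h k k.lt_succ_self]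

lemma exists_iterate_eq_and_forall_lt_ne (h : ∃ k, p^[k] u = x) :
    ∃ k, p^[k] u = x ∧ ∀ j < k, p^[j] u ≠ x :=
  ⟨Nat.find h, Nat.find_spec h, fun _ => Nat.find_min h⟩

variable (G A) in
lemma finite_setOf_isParentMap [G.LocallyFinite] : {p | IsParentMap G A p}.Finite := by
  refine (Set.finite_range fun (g : (x : A) → G.neighborFinset x) x =>
    if hx : x ∈ A then (g ⟨x, hx⟩ : α) else x).subset fun p hp => ?_
  refine ⟨fun x => ⟨p x, (G.mem_neighborFinset _ _).2 (hp.adj x x.2)⟩, funext fun x => ?_⟩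
  by_cases hx : x ∈ A
  · simp only [hx, dif_pos]
  · simp only [hx, dif_neg, not_false_eq_true, hp.apply_eq x hx]

variable (G A) in
/-- The spanning forests of `A` rooted outside `A`, as parent maps. -/
noncomputable def parentMaps [G.LocallyFinite] : Finset (α → α) :=
  (finite_setOf_isParentMap G A).toFinset

lemma mem_parentMaps [G.LocallyFinite] : p ∈ parentMaps G A ↔ IsParentMap G A p := by
  simp [parentMaps]

variable [DecidableEq α]

lemma IsParentMap.piecewise (hp : IsParentMap G A p) (H : Finset α) :
    IsParentMap G (A \ H) (H.piecewise id p) where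
  adj x hx := by
    rw [Finset.mem_sdiff] at hx
    rw [H.piecewise_eq_of_notMem _ _ hx.2]
    exact hp.adj x hx.1
  apply_eq x hx := by
    by_cases hH : x ∈ H
    · exact H.piecewise_eq_of_mem _ _ hH
    · rw [H.piecewise_eq_of_notMem _ _ hH]
      exact hp.apply_eq x fun hA => hx (Finset.mem_sdiff.2 ⟨hA, hH⟩)
  exists_iterate_notMem x := by
    obtain ⟨k, hk⟩ := hp.exists_iterate_notMem x
    by_contra! hstay
    have heq : p^[k] x = (H.piecewise id p)^[k] x := iterate_eq_iterate_of_forall_lt fun j _ =>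
      (H.piecewise_eq_of_notMem _ _ (Finset.mem_sdiff.1 (hstay j)).2).symm
    exact hk (heq ▸ (Finset.mem_sdiff.1 (hstay k)).1)

lemma IsParentMap.update (hp : IsParentMap G A p) (hxu : G.Adj x u) (horbit : ∀ k, p^[k] u ≠ x) :
    IsParentMap G (insert x A) (Function.update p x u) := by
  have havoid : ∀ y, (∀ k, p^[k] y ≠ x) → ∃ k, (Function.update p x u)^[k] y ∉ insert x A := by
    intro y hy
    obtain ⟨k, hk⟩ := hp.exists_iterate_notMem y
    refine ⟨k, ?_⟩
    rw [iterate_eq_iterate_of_forall_lt fun j _ => Function.update_of_ne (hy j) _ _]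
    simp [hk, hy k]
  refine ⟨fun y hy => ?_, fun y hy => ?_, fun y => ?_⟩
  · rcases eq_or_ne y x with rfl | hyx
    · rwa [Function.update_self]
    · rw [Function.update_of_ne hyx]
      exact hp.adj y (Finset.mem_of_mem_insert_of_ne hy hyx)
  · rw [Finset.mem_insert, not_or] at hy
    rw [Function.update_of_ne hy.1]
    exact hp.apply_eq y hy.2
  · by_cases hy : ∃ k, p^[k] y = x
    · obtain ⟨k, hk, hlt⟩ := exists_iterate_eq_and_forall_lt_ne hy
      obtain ⟨m, hm⟩ := havoid u horbit
      refine ⟨m + 1 + k, ?_⟩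
      rwa [Function.iterate_add_apply,
        iterate_eq_iterate_of_forall_lt fun j hj => Function.update_of_ne (hlt j hj) _ _, hk,
        Function.iterate_succ_apply, Function.update_self]
    · exact havoid y (not_exists.1 hy)

end ParentMap

section CyclePopping

variable {α : Type*} {G : SimpleGraph α} {A B : Finset α} {F F' : α → α} {x u z : α}
  {t η : List α}

lemma eq_of_isChain_append_singleton {L : List α} (hF : (L ++ [x]).IsChain fun a b => F a = b)
    (hF' : (L ++ [x]).IsChain fun a b => F' a = b) : ∀ v ∈ L, F v = F' v := by
  induction L with
  | nil => simp
  | cons a L ih =>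
    obtain ⟨b, M, hM⟩ : ∃ b M, L ++ [x] = b :: M := by cases L <;> simp
    rw [List.cons_append, hM, List.isChain_cons_cons] at hF hF'
    rw [List.forall_mem_cons]
    exact ⟨hF.1.trans hF'.1.symm, ih (hM ▸ hF.2) (hM ▸ hF'.2)⟩

lemma IsParentMap.exists_orbit_path (hF : IsParentMap G A F) (hux : u ≠ x)
    (h : ∃ k, F^[k] u = x) :
    ∃ L : List α, L.head? = some u ∧ (L ++ [x]).IsChain (fun a b => F a = b) ∧ L.Nodup ∧
      x ∉ L ∧ ∀ v ∈ L, v ∈ A := by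
  obtain ⟨k, hk, hlt⟩ := exists_iterate_eq_and_forall_lt_ne h
  obtain ⟨m, rfl⟩ := Nat.exists_eq_succ_of_ne_zero fun hk0 : k = 0 => hux (by simpa [hk0] using hk)
  refine ⟨(List.range (m + 1)).map fun i => F^[i] u, by simp [List.range_succ_eq_map], ?_, ?_,
    by simpa only [List.mem_map, List.mem_range, not_exists, not_and] using hlt, ?_⟩
  · have hsnoc : ((List.range (m + 1)).map fun i => F^[i] u) ++ [x] =
        (List.range (m + 2)).map fun i => F^[i] u := by
      rw [List.range_succ (n := m + 1), List.map_append, List.map_singleton, hk]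
    rw [hsnoc, List.isChain_map, List.isChain_iff_getElem]
    intro i hi
    simp [Function.iterate_succ_apply']
  · refine List.Nodup.map_on ?_ List.nodup_range
    have hne : ∀ i j, i < j → j < m + 1 → F^[i] u ≠ F^[j] u := by
      intro i j hij hj he
      refine hlt (m + 1 - j + i) (by omega) ?_
      rw [Function.iterate_add_apply, he, ← Function.iterate_add_apply, Nat.sub_add_cancel hj.le]
      exact hk
    intro i hi j hj he
    rw [List.mem_range] at hi hj
    by_contra hij
    rcases Nat.lt_or_gt_of_ne hij with hij | hij
    · exact hne i j hij hj he
    · exact hne j i hij hi he.symm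
  · simp only [List.mem_map, List.mem_range, forall_exists_index, and_imp,
      forall_apply_eq_imp_iff₂]
    intro i hi
    by_contra hv
    refine hlt i hi ?_
    rw [← hk, Nat.succ_eq_add_one, ← Nat.sub_add_cancel hi.le, Function.iterate_add_apply]
    exact (Function.iterate_fixed (hF.apply_eq _ hv) _).symm

variable (G B z) in
lemma finite_setOf_path :
    {η : List α | η.Nodup ∧ (∀ v ∈ η, v ∈ B) ∧ η.IsChain G.Adj ∧ η.getLast? = some z}.Finite := by
  refine ((List.finite_length_le B B.card).image (List.map Subtype.val)).subset ?_
  rintro η ⟨hnodup, hB, -⟩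
  refine ⟨η.attach.map fun v => ⟨v.1, hB v.1 v.2⟩, ?_, ?_⟩
  · simp only [Set.mem_ofPred_eq, List.length_map, List.length_attach]
    rw [← List.toFinset_card_of_nodup hnodup]
    exact Finset.card_le_card fun v hv => hB v (List.mem_toFinset.1 hv)
  · rw [List.map_map]
    exact List.attach_map_subtype_val η

variable (G B z) in
/-- The self-avoiding paths in `B` which start at `z`. Their most recent vertex is the head of the
list, so `z` is its last entry. -/
noncomputable def selfAvoidingPaths : Finset (List α) := (finite_setOf_path G B z).toFinset

lemma mem_selfAvoidingPaths : η ∈ selfAvoidingPaths G B z ↔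
    η.Nodup ∧ (∀ v ∈ η, v ∈ B) ∧ η.IsChain G.Adj ∧ η.getLast? = some z := by
  simp [selfAvoidingPaths]

lemma isChain_adj_append {L : List α} (hF : ∀ v ∈ L, G.Adj v (F v))
    (hL : (L ++ [x]).IsChain fun a b => F a = b) (ht : (x :: t).IsChain G.Adj) :
    (L ++ x :: t).IsChain G.Adj := by
  rw [List.isChain_append] at hL ⊢
  refine ⟨hL.1.imp_of_mem_imp fun a b ha _ (hab : F a = b) => hab ▸ hF a ha, ht,
    fun a ha b hb => ?_⟩
  obtain rfl : x = b := by simpa using hb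
  exact hL.2.2 a ha x rfl ▸ hF a (List.mem_of_getLast? ha)

variable [DecidableEq α]

/-- Cycle popping: `(η, F'')` arises from the path `x :: t` and the parent map `F` by redirecting
`x` to `u`. If this closes a cycle, the path is prolonged by the cycle and its vertices become
roots; otherwise `x` leaves the path and joins the forest with parent `u`. -/
def IsRegraft (x : α) (t : List α) (F : α → α) (u : α) (η : List α) (F'' : α → α) : Prop :=
  (∃ L : List α, L.head? = some u ∧ (L ++ [x]).IsChain (fun a b => F a = b) ∧
    η = L ++ x :: t ∧ F'' = L.toFinset.piecewise id F) ∨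
  (η = t ∧ F'' = Function.update F x u)

lemma IsRegraft.inj {u' : α} {F'' : α → α} (hx : F x = x) (hx' : F' x = x)
    (h : IsRegraft x t F u η F'') (h' : IsRegraft x t F' u' η F'') : F = F' ∧ u = u' := by
  rcases h with ⟨L, hLu, hLF, rfl, rfl⟩ | ⟨rfl, rfl⟩ <;>
    rcases h' with ⟨L', hLu', hLF', hη, heq⟩ | ⟨hη, heq⟩
  · obtain rfl := List.append_cancel_right hη
    refine ⟨funext fun v => ?_, Option.some_inj.1 (hLu.symm.trans hLu')⟩
    by_cases hv : v ∈ L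
    · exact eq_of_isChain_append_singleton hLF hLF' v hv
    · simpa [Finset.piecewise, hv] using congrFun heq v
  · have := congrArg List.length hη
    simp only [List.length_append, List.length_cons] at this
    omega
  · have := congrArg List.length hη
    simp only [List.length_append, List.length_cons] at this
    omega
  · refine ⟨funext fun v => ?_, by simpa using congrFun heq x⟩
    rcases eq_or_ne v x with rfl | hv
    · rw [hx, hx']
    · simpa [hv] using congrFun heq v

variable [G.LocallyFinite]

variable (G z) in
/-- The paths reached from `η` in one step of loop-erased random walk; from the empty path this is
the trivial path at `z`. -/
def loopSteps : List α → Finset (List α)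
  | [] => {[z]}
  | x :: t => (G.neighborFinset x).image (eraseLoop (x :: t))

variable (G B z) in
/-- The paths, including the empty one, from which `η` is reached in one step of loop-erased random
walk. -/
noncomputable def loopPredecessors (η : List α) : Finset (List α) :=
  (insert [] (selfAvoidingPaths G B z)).filter fun ξ => η ∈ loopSteps G z ξ

lemma tail_mem_loopPredecessors (hη : x :: t ∈ selfAvoidingPaths G B z) :
    t ∈ loopPredecessors G B z (x :: t) := by
  obtain ⟨hnodup, hB, hchain, hlast⟩ := mem_selfAvoidingPaths.1 hη
  rw [loopPredecessors, Finset.mem_filter]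
  cases t with
  | nil => simpa [loopSteps] using hlast
  | cons y t =>
    rw [List.nodup_cons] at hnodup
    rw [List.isChain_cons_cons] at hchain
    refine ⟨Finset.mem_insert_of_mem (mem_selfAvoidingPaths.2 ⟨hnodup.2,
      fun v hv => hB v (List.mem_cons_of_mem x hv), hchain.2, by simpa using hlast⟩), ?_⟩
    exact Finset.mem_image.2 ⟨x, (G.mem_neighborFinset _ _).2 hchain.1.symm,
      eraseLoop_of_notMem hnodup.1⟩

lemma append_mem_loopPredecessors (hxu : G.Adj x u)
    {L : List α} (hLu : L.head? = some u) (hxL : x ∉ L)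
    (hL : L ++ x :: t ∈ selfAvoidingPaths G B z) :
    L ++ x :: t ∈ loopPredecessors G B z (x :: t) := by
  obtain ⟨M, rfl⟩ := List.head?_eq_some_iff.1 hLu
  exact Finset.mem_filter.2 ⟨Finset.mem_insert_of_mem hL, Finset.mem_image.2
    ⟨x, (G.mem_neighborFinset _ _).2 hxu.symm, eraseLoop_append_cons hxL⟩⟩

lemma IsParentMap.exists_isRegraft (hη : x :: t ∈ selfAvoidingPaths G B z)
    (hF : IsParentMap G (B \ (x :: t).toFinset) F) (hxu : G.Adj x u) :
    ∃ ξ F'', IsRegraft x t F u ξ F'' ∧ ξ ∈ loopPredecessors G B z (x :: t) ∧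
      IsParentMap G (B \ ξ.toFinset) F'' := by
  obtain ⟨hnodup, hB, hchain, hlast⟩ := mem_selfAvoidingPaths.1 hη
  by_cases horbit : ∃ k, F^[k] u = x
  · obtain ⟨L, hLu, hLF, hLnodup, hxL, hLB⟩ := hF.exists_orbit_path hxu.ne' horbit
    have hL : L ++ x :: t ∈ selfAvoidingPaths G B z := by
      refine mem_selfAvoidingPaths.2 ⟨List.nodup_append'.2 ⟨hLnodup, hnodup, fun v hv hvt => ?_⟩,
        fun v hv => ?_, isChain_adj_append (fun v hv => hF.adj v (hLB v hv)) hLF hchain, ?_⟩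
      · exact (Finset.mem_sdiff.1 (hLB v hv)).2 (List.mem_toFinset.2 hvt)
      · rcases List.mem_append.1 hv with hv | hv
        · exact (Finset.mem_sdiff.1 (hLB v hv)).1
        · exact hB v hv
      · rw [List.getLast?_append, hlast, Option.some_or]
    refine ⟨_, _, Or.inl ⟨L, hLu, hLF, rfl, rfl⟩, append_mem_loopPredecessors hxu hLu hxL hL, ?_⟩
    rw [List.toFinset_append, Finset.union_comm, ← Finset.sup_eq_union, ← sdiff_sdiff]
    exact hF.piecewise L.toFinset
  · refine ⟨t, _, Or.inr ⟨rfl, rfl⟩, tail_mem_loopPredecessors hη, ?_⟩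
    have hxt : x ∈ B \ t.toFinset :=
      Finset.mem_sdiff.2 ⟨hB x List.mem_cons_self, by simpa using (List.nodup_cons.1 hnodup).1⟩
    have hupdate := hF.update hxu (not_exists.1 horbit)
    rwa [List.toFinset_cons, Finset.sdiff_insert, Finset.insert_erase hxt] at hupdate

/-- The uniform spanning forest weights `η ↦ |parentMaps G (B \ η)|` are superinvariant for
loop-erased random walk. -/
lemma card_parentMaps_mul_degree_le (hη : x :: t ∈ selfAvoidingPaths G B z) :
    (parentMaps G (B \ (x :: t).toFinset)).card * G.degree x ≤
      ∑ ξ ∈ loopPredecessors G B z (x :: t), (parentMaps G (B \ ξ.toFinset)).card := by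
  rw [← G.card_neighborFinset_eq_degree, ← Finset.card_product, ← Finset.card_sigma]
  refine Finset.card_le_card_of_forall_subsingleton
    (fun a b => IsRegraft x t a.1 a.2 b.1 b.2) ?_ ?_
  · rintro ⟨F, u⟩ hFu
    rw [Finset.mem_product, mem_parentMaps, G.mem_neighborFinset] at hFu
    obtain ⟨ξ, F'', hregraft, hξ, hF''⟩ := hFu.1.exists_isRegraft hη hFu.2
    exact ⟨⟨ξ, F''⟩, Finset.mem_sigma.2 ⟨hξ, mem_parentMaps.2 hF''⟩, hregraft⟩
  · rintro b - ⟨F, u⟩ ⟨hF, hFb⟩ ⟨F', u'⟩ ⟨hF', hFb'⟩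
    have hfix : ∀ F, IsParentMap G (B \ (x :: t).toFinset) F → F x = x := fun F hF =>
      hF.apply_eq x (by simp)
    obtain ⟨rfl, rfl⟩ := hFb.inj
      (hfix F (mem_parentMaps.1 (Finset.mem_product.1 hF).1))
      (hfix F' (mem_parentMaps.1 (Finset.mem_product.1 hF').1)) hFb'
    rfl

variable (G B z) in
lemma sum_selfAvoidingPaths_le {f g : List α → ℝ} (hf : ∀ η, 0 ≤ f η)
    (hfg : ∀ x t, g (x :: t) + ∑ w ∈ G.neighborFinset x, f (eraseLoop (x :: t) w) ≤
      G.degree x * f (x :: t)) :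
    ∑ η ∈ selfAvoidingPaths G B z, ((parentMaps G (B \ η.toFinset)).card : ℝ) * g η ≤
      f [z] * (parentMaps G B).card := by
  set P := selfAvoidingPaths G B z with hP
  set N : List α → ℝ := fun η => (parentMaps G (B \ η.toFinset)).card with hN
  have hnil : [] ∉ P := by simp [hP, mem_selfAvoidingPaths]
  have hstep : ∀ η ∈ P, N η * g η + N η * ∑ ξ ∈ loopSteps G z η, f ξ ≤
      (∑ ξ ∈ loopPredecessors G B z η, N ξ) * f η := by
    intro η hη
    obtain _ | ⟨x, t⟩ := η
    · exact absurd hη hnil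
    rw [← mul_add]
    calc N (x :: t) * (g (x :: t) + ∑ ξ ∈ loopSteps G z (x :: t), f ξ)
        ≤ N (x :: t) * (G.degree x * f (x :: t)) := by
          refine mul_le_mul_of_nonneg_left (le_trans ?_ (hfg x t)) (Nat.cast_nonneg _)
          gcongr
          exact Finset.sum_image_le_of_nonneg fun _ _ => hf _
      _ ≤ (∑ ξ ∈ loopPredecessors G B z (x :: t), N ξ) * f (x :: t) := by
          rw [← mul_assoc]
          refine mul_le_mul_of_nonneg_right ?_ (hf _)
          simp only [hN]
          exact_mod_cast card_parentMaps_mul_degree_le hη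
  have hswap : ∑ η ∈ P, (∑ ξ ∈ loopPredecessors G B z η, N ξ) * f η ≤
      ∑ ξ ∈ insert [] P, N ξ * ∑ η ∈ loopSteps G z ξ, f η := by
    simp only [Finset.sum_mul, Finset.mul_sum]
    rw [Finset.sum_comm' (t' := insert [] P)
      (s' := fun ξ => P.filter fun η => η ∈ loopSteps G z ξ)
      fun η ξ => by simp only [loopPredecessors, Finset.mem_filter]; tauto]
    refine Finset.sum_le_sum fun ξ _ => Finset.sum_le_sum_of_subset_of_nonneg
      (fun η hη => (Finset.mem_filter.1 hη).2) fun η _ _ => ?_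
    exact mul_nonneg (Nat.cast_nonneg _) (hf η)
  have hroot : N [] * ∑ η ∈ loopSteps G z [], f η = f [z] * (parentMaps G B).card := by
    simp [hN, loopSteps, mul_comm]
  have hsum := (Finset.sum_le_sum hstep).trans hswap
  rw [Finset.sum_add_distrib, Finset.sum_insert hnil, hroot] at hsum
  linarith

end CyclePopping

section ForestGraph

variable {α : Type*} {G : SimpleGraph α} {A : Finset α} {p : α → α} {u w : α}

lemma mem_ball_add_one_iff {c : α} {n : ℕ} :
    u ∈ G.ball c (n + 1) ↔ ∃ W : G.Walk u c, W.length ≤ n := by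
  rw [SimpleGraph.mem_ball, ENat.lt_add_one_iff (ENat.natCast_ne_top n)]
  constructor
  · intro h
    obtain ⟨W, hW⟩ := SimpleGraph.exists_walk_of_edist_ne_top
      (h.trans_lt (ENat.natCast_lt_top n)).ne
    exact ⟨W, by rwa [← hW, Nat.cast_le] at h⟩
  · rintro ⟨W, hW⟩
    exact (SimpleGraph.edist_le W).trans (Nat.cast_le.2 hW)

lemma mem_ball_of_mem_support {c : α} {n : ℕ} (W : G.Walk u c) (hW : W.length ≤ n)
    (hw : w ∈ W.support) : w ∈ G.ball c (n + 1) :=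
  mem_ball_add_one_iff.2 ⟨W.dropUntil w hw, (W.length_dropUntil_le_length hw).trans hW⟩

lemma ball_mono_graph {G' : SimpleGraph α} (h : G ≤ G') (c : α) (r : ℕ∞) :
    G.ball c r ⊆ G'.ball c r :=
  fun _ hv => (SimpleGraph.edist_anti h).trans_lt hv

/-- The forest encoded by the parent map `p`, with the orientation towards the roots forgotten. -/
def forestGraph (p : α → α) : SimpleGraph α :=
  SimpleGraph.fromRel fun u w => p u = w

lemma forestGraph_adj : (forestGraph p).Adj u w ↔ u ≠ w ∧ (p u = w ∨ p w = u) :=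
  SimpleGraph.fromRel_adj _ _ _

lemma IsParentMap.mem_of_apply_eq (hp : IsParentMap G A p) (huw : u ≠ w) (h : p u = w) : u ∈ A := by
  by_contra hu
  exact huw ((hp.apply_eq u hu).symm.trans h)

lemma IsParentMap.forestGraph_le (hp : IsParentMap G A p) : forestGraph p ≤ G := by
  have hadj : ∀ u w, u ≠ w → p u = w → G.Adj u w := fun u w huw h =>
    h ▸ hp.adj u (hp.mem_of_apply_eq huw h)
  intro u w huw
  obtain ⟨hne, h | h⟩ := forestGraph_adj.1 huw
  · exact hadj u w hne h
  · exact (hadj w u hne.symm h).symm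

/-- The edges shared by all the forests `p ∈ Q`. -/
def commonForest (Q : Finset (α → α)) : SimpleGraph α :=
  ⨅ p : Q, forestGraph p.1

lemma commonForest_adj {Q : Finset (α → α)} :
    (commonForest Q).Adj u w ↔ (∀ p ∈ Q, (forestGraph p).Adj u w) ∧ u ≠ w := by
  simp [commonForest]

lemma commonForest_anti {Q Q' : Finset (α → α)} (h : Q' ⊆ Q) : commonForest Q ≤ commonForest Q' :=
  fun _ _ hadj => commonForest_adj.2
    ⟨fun p hp => (commonForest_adj.1 hadj).1 p (h hp), (commonForest_adj.1 hadj).2⟩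

end ForestGraph

section Exploration

variable {α : Type*} {G : SimpleGraph α} {A H : Finset α} {Q : Finset (α → α)} {p q : α → α}
  {o x z w : α} {η : List α} {n : ℕ}

lemma IsParentMap.exists_exit (hp : IsParentMap G A p) (hHA : H ⊆ A) (ho : o ∈ H) :
    ∃ x ∈ H, p x ∉ H := by
  by_contra! hstay
  obtain ⟨k, hk⟩ := hp.exists_iterate_notMem o
  have hiter : ∀ k, p^[k] o ∈ H := fun k => by
    induction k with
    | zero => exact ho
    | succ k ih => exact Function.iterate_succ_apply' p k o ▸ hstay _ ih
  exact hk (hHA (hiter k))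

/-- If `p` and `q` contain a common tree on `H` and leave it through the same edge, then this edge
orients the whole tree. -/
lemma eqOn_of_walk_commonForest (hp : p ∈ Q) (hq : q ∈ Q) (hxH : p x ∉ H) (hpq : p x = q x)
    {v y : H} (W : ((commonForest Q).induce (H : Set α)).Walk v y) (hy : y.1 = x) :
    ∃ k, p^[k] v = x ∧ ∀ j ≤ k, p (p^[j] v) = q (p^[j] v) := by
  induction W with
  | nil => exact ⟨0, hy, fun j hj => by obtain rfl := Nat.le_zero.1 hj; simpa [hy] using hpq⟩
  | @cons v w _ hvw _ ih =>
    obtain ⟨k, hk, hagree⟩ := ih hy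
    have hadj := (commonForest_adj.1 hvw).1
    by_cases hwv : p w = v
    · cases k with
      | zero => exact absurd (hwv ▸ v.2) (by rwa [show (w : α) = x from hk])
      | succ k =>
        refine ⟨k, by rwa [← hwv, ← Function.iterate_succ_apply], fun j hj => ?_⟩
        rw [← hwv, ← Function.iterate_succ_apply]
        exact hagree (j + 1) (by omega)
    · have hpv : p v = w := (forestGraph_adj.1 (hadj p hp)).2.resolve_right hwv
      have hqv : q v = w := (forestGraph_adj.1 (hadj q hq)).2.resolve_right fun h =>
        hwv ((hagree 0 k.zero_le).trans h)
      refine ⟨k + 1, by rwa [Function.iterate_succ_apply, hpv], fun j hj => ?_⟩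
      cases j with
      | zero => exact hpv.trans hqv.symm
      | succ j =>
        rw [Function.iterate_succ_apply, hpv]
        exact hagree j (by omega)

variable [DecidableEq α]

lemma eq_of_piecewise_eq (hconn : ((commonForest Q).induce (H : Set α)).Connected)
    (hp : p ∈ Q) (hq : q ∈ Q) (hx : x ∈ H) (hxH : p x ∉ H) (hpq : p x = q x)
    (hrest : H.piecewise id p = H.piecewise id q) : p = q := by
  funext v
  by_cases hv : v ∈ H
  · obtain ⟨W⟩ := hconn.preconnected ⟨v, hv⟩ ⟨x, hx⟩
    obtain ⟨k, -, hagree⟩ := eqOn_of_walk_commonForest hp hq hxH hpq W rfl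
    exact hagree 0 k.zero_le
  · simpa [hv] using congrFun hrest v

lemma connected_commonForest_union (hconn : ((commonForest Q).induce (H : Set α)).Connected)
    (hz : z ∈ H) (hw : w ∈ η) (hadj : (commonForest Q).Adj z w)
    (hη : η.IsChain (commonForest Q).Adj) :
    ((commonForest Q).induce ((H ∪ η.toFinset : Finset α) : Set α)).Connected := by
  have hpath := (SimpleGraph.Walk.ofSupport η (List.ne_nil_of_mem hw) hη).connected_induce_support
  rw [SimpleGraph.Walk.support_ofSupport] at hpath
  rw [Finset.coe_union, List.coe_toFinset]
  exact SimpleGraph.connected_induce_union hconn.preconnected hpath.preconnected hz hw hadj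

lemma IsParentMap.exists_branch (hp : IsParentMap G A p) (hA : G.ball o (n + 1) ⊆ A) (ho : o ∈ H)
    {y : α} (hy : y ∈ (forestGraph p).ball o (n + 1)) (hyH : y ∉ H) :
    ∃ z ∈ H, ∃ w, (forestGraph p).Adj z w ∧ ∃ η ∈ selfAvoidingPaths G (A \ H) w,
      η.length ≤ n ∧ η.IsChain (forestGraph p).Adj ∧ η.head? = some y := by
  obtain ⟨W, hW⟩ := mem_ball_add_one_iff.1 hy
  have hpath := W.bypass_isPath.support_nodup
  have hchain := W.bypass.isChain_adj_support
  have hmem : ∀ v ∈ W.bypass.support, v ∈ A := fun v hv =>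
    hA (ball_mono_graph hp.forestGraph_le _ _
      (mem_ball_of_mem_support W.bypass (W.length_bypass_le_length.trans hW) hv))
  obtain ⟨z, hfind⟩ : ∃ z, W.bypass.support.find? (fun v => decide (v ∈ H)) = some z :=
    Option.isSome_iff_exists.1
      (List.find?_isSome.2 ⟨o, W.bypass.end_mem_support, decide_eq_true ho⟩)
  obtain ⟨hz, η, R, hsupp, hη⟩ := List.find?_eq_some_iff_append.1 hfind
  have hlen : η.length ≤ n := by
    have := congrArg List.length hsupp
    rw [W.bypass.length_support, List.length_append, List.length_cons] at this
    have := W.length_bypass_le_length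
    omega
  have hne : η ≠ [] := by
    rintro rfl
    rw [List.nil_append, ← W.bypass.cons_tail_support] at hsupp
    exact hyH ((List.cons.inj hsupp).1 ▸ of_decide_eq_true hz)
  have hhead : η.head? = some y := by
    rw [← List.head?_append_of_ne_nil (l₂ := z :: R) _ hne, ← hsupp, ← W.bypass.cons_tail_support]
    rfl
  rw [hsupp] at hpath hchain hmem
  rw [List.isChain_append] at hchain
  refine ⟨z, of_decide_eq_true hz, η.getLast hne, ?_, η, mem_selfAvoidingPaths.2
    ⟨hpath.of_append_left, fun v hv => ?_, hchain.1.imp fun _ _ h => hp.forestGraph_le h,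
      List.getLast?_eq_some_getLast hne⟩, hlen, hchain.1, hhead⟩
  · exact (hchain.2.2 _ (List.getLast?_eq_some_getLast hne) z rfl).symm
  · exact Finset.mem_sdiff.2 ⟨hmem v (List.mem_append_left _ hv), by simpa using hη v hv⟩

variable [G.LocallyFinite]

/-- The set `H ∋ o` of explored vertices carries a tree which is common to all the forests
`p ∈ Q`. -/
structure IsExploration (G : SimpleGraph α) [G.LocallyFinite] (A : Finset α) (o : α)
    (H : Finset α) (Q : Finset (α → α)) : Prop where
  root_mem : o ∈ H
  subset : H ⊆ A
  forests_subset : Q ⊆ parentMaps G A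
  connected : ((commonForest Q).induce (H : Set α)).Connected

lemma IsExploration.card_le {D : ℕ} (h : IsExploration G A o H Q) (hD : ∀ x, G.degree x ≤ D) :
    Q.card ≤ D * (parentMaps G (A \ H)).card * H.card := by
  have hcard : Q.card ≤ (parentMaps G (A \ H) ×ˢ H.sigma fun x => G.neighborFinset x).card := by
    refine Finset.card_le_card_of_forall_subsingleton
      (fun p a => p a.2.1 = a.2.2 ∧ a.2.2 ∉ H ∧ H.piecewise id p = a.1) (fun p hp => ?_) ?_
    · have hp' := mem_parentMaps.1 (h.forests_subset hp)
      obtain ⟨x, hx, hxH⟩ := hp'.exists_exit h.subset h.root_mem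
      exact ⟨⟨H.piecewise id p, ⟨x, p x⟩⟩, Finset.mem_product.2
        ⟨mem_parentMaps.2 (hp'.piecewise H), Finset.mem_sigma.2
          ⟨hx, (G.mem_neighborFinset _ _).2 (hp'.adj x (h.subset hx))⟩⟩, rfl, hxH, rfl⟩
    · rintro ⟨p', ⟨x, y⟩⟩ ha p ⟨hp, hpx, hy, hp'⟩ q ⟨hq, hqx, -, hq'⟩
      exact eq_of_piecewise_eq h.connected hp hq
        (Finset.mem_sigma.1 (Finset.mem_product.1 ha).2).1 (hpx ▸ hy) (hpx.trans hqx.symm)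
        (hp'.trans hq'.symm)
  have hdegree : ∑ x ∈ H, (G.neighborFinset x).card ≤ H.card • D :=
    Finset.sum_le_card_nsmul _ _ _ fun x _ => (G.card_neighborFinset_eq_degree x).trans_le (hD x)
  rw [Finset.card_product, Finset.card_sigma] at hcard
  refine hcard.trans ((Nat.mul_le_mul_left _ hdegree).trans_eq ?_)
  rw [smul_eq_mul]
  ring

variable (G A H n) in
/-- The possible branches with at most `n` vertices hanging off the explored set `H`: a path `η`
in `A \ H` from `w`, where `w` is adjacent to `z ∈ H`. -/
noncomputable def branches : Finset (Σ _ : α, Σ _ : α, List α) :=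
  H.sigma fun z => (G.neighborFinset z).sigma fun w =>
    (selfAvoidingPaths G (A \ H) w).filter fun η => η.length ≤ n

lemma mem_branches : ⟨z, w, η⟩ ∈ branches G A H n ↔
    z ∈ H ∧ G.Adj z w ∧ η ∈ selfAvoidingPaths G (A \ H) w ∧ η.length ≤ n := by
  simp [branches]

/-- The forest `p` contains the branch `b` and the edge attaching it to the explored set. -/
def HasBranch (p : α → α) (b : Σ _ : α, Σ _ : α, List α) : Prop :=
  (forestGraph p).Adj b.1 b.2.1 ∧ b.2.2.IsChain (forestGraph p).Adj

lemma IsExploration.union_branch (h : IsExploration G A o H Q) (hb : ⟨z, w, η⟩ ∈ branches G A H n) :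
    IsExploration G A o (H ∪ η.toFinset) (Q.filter fun p => HasBranch p ⟨z, w, η⟩) := by
  obtain ⟨hz, hzw, hη, -⟩ := mem_branches.1 hb
  obtain ⟨-, hηA, hchain, hlast⟩ := mem_selfAvoidingPaths.1 hη
  refine ⟨Finset.mem_union_left _ h.root_mem, Finset.union_subset h.subset fun v hv =>
      (Finset.mem_sdiff.1 (hηA v (List.mem_toFinset.1 hv))).1,
    (Finset.filter_subset _ _).trans h.forests_subset,
    connected_commonForest_union (h.connected.mono fun _ _ hadj => ?_) hz
      (List.mem_of_getLast? hlast) ?_ ?_⟩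
  · exact commonForest_anti (Finset.filter_subset _ _) hadj
  · exact commonForest_adj.2 ⟨fun p hp => (Finset.mem_filter.1 hp).2.1, hzw.ne⟩
  · rw [List.isChain_iff_getElem] at hchain ⊢
    exact fun i hi => commonForest_adj.2 ⟨fun p hp =>
      List.isChain_iff_getElem.1 (Finset.mem_filter.1 hp).2.2 i hi, (hchain i hi).ne⟩

lemma IsParentMap.ncard_ball_le (hp : IsParentMap G A p) (hA : G.ball o (n + 1) ⊆ A)
    (ho : o ∈ H) : ((forestGraph p).ball o (n + 1)).ncard ≤
      H.card + ((branches G A H n).filter (HasBranch p)).card := by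
  have hcover : (forestGraph p).ball o (n + 1) ⊆ ((H ∪ ((branches G A H n).filter
      (HasBranch p)).image fun b => b.2.2.headD o : Finset α) : Set α) := by
    intro y hy
    rw [Finset.mem_coe, Finset.mem_union, Finset.mem_image]
    refine or_iff_not_imp_left.2 fun hyH => ?_
    obtain ⟨z, hz, w, hzw, η, hη, hlen, hchain, hhead⟩ := hp.exists_branch hA ho hy hyH
    refine ⟨⟨z, w, η⟩, Finset.mem_filter.2
      ⟨mem_branches.2 ⟨hz, hp.forestGraph_le hzw, hη, hlen⟩, hzw, hchain⟩, ?_⟩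
    rw [List.headD_eq_head?_getD, hhead, Option.getD_some]
  refine (Set.ncard_le_ncard hcover (Finset.finite_toSet _)).trans ?_
  rw [Set.ncard_coe_finset]
  exact (Finset.card_union_le _ _).trans (Nat.add_le_add_left Finset.card_image_le _)

end Exploration

section BallMoments

variable {α : Type*} [DecidableEq α] {G : SimpleGraph α} [G.LocallyFinite] {A H : Finset α}
  {Q : Finset (α → α)} {D n : ℕ} {C : ℝ} {o : α}

variable (G) in
/-- Loop-erased path estimate: in the wired uniform spanning tree of any finite set, the expected
number of vertices whose path to a given `z` has at most `n` vertices is `O(n)`. Here `D` is a bound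
on the degrees and the probability that the tree contains the path `η` to `z` inside `B` is
proportional to `(parentMaps G (B \ η)).card`. -/
def PathBound (D : ℕ) (C : ℝ) : Prop :=
  ∀ n : ℕ, 1 ≤ n → ∀ (B : Finset α) (z : α),
    (D : ℝ) * ∑ η ∈ (selfAvoidingPaths G B z).filter (fun η => η.length ≤ n),
      ((parentMaps G (B \ η.toFinset)).card : ℝ) ≤ C * n * (parentMaps G B).card

lemma sum_branches_le (hG : PathBound G D C) (hC : 0 ≤ C) (hD : ∀ x, G.degree x ≤ D)
    (hn : 1 ≤ n) :
    (D : ℝ) * ∑ b ∈ branches G A H n, ((parentMaps G (A \ (H ∪ b.2.2.toFinset))).card : ℝ) ≤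
      D * (H.card * (C * n * (parentMaps G (A \ H)).card)) := by
  set N : ℝ := C * n * (parentMaps G (A \ H)).card with hN
  have hN0 : 0 ≤ N := by positivity
  calc (D : ℝ) * ∑ b ∈ branches G A H n, ((parentMaps G (A \ (H ∪ b.2.2.toFinset))).card : ℝ)
      = ∑ z ∈ H, ∑ w ∈ G.neighborFinset z, (D : ℝ) *
          ∑ η ∈ (selfAvoidingPaths G (A \ H) w).filter (fun η => η.length ≤ n),
            ((parentMaps G ((A \ H) \ η.toFinset)).card : ℝ) := by
        simp only [branches, Finset.sum_sigma, Finset.mul_sum, ← Finset.sup_eq_union, ← sdiff_sdiff]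
    _ ≤ ∑ z ∈ H, ∑ _w ∈ G.neighborFinset z, N :=
        Finset.sum_le_sum fun z _ => Finset.sum_le_sum fun w _ => hG n hn _ w
    _ ≤ ∑ _z ∈ H, D * N := by
        refine Finset.sum_le_sum fun z _ => ?_
        rw [Finset.sum_const, nsmul_eq_mul, G.card_neighborFinset_eq_degree]
        exact mul_le_mul_of_nonneg_right (Nat.cast_le.2 (hD z)) hN0
    _ = D * (H.card * N) := by
        rw [Finset.sum_const, nsmul_eq_mul]
        ring

/-- Each further power of the ball volume reveals one more vertex, hence one more branch. -/
lemma IsExploration.sum_ncard_ball_pow_succ_le (h : IsExploration G A o H Q)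
    (hA : G.ball o (n + 1) ⊆ A) (k : ℕ) :
    ∑ p ∈ Q, (((forestGraph p).ball o (n + 1)).ncard : ℝ) ^ (k + 1) ≤
      H.card * ∑ p ∈ Q, (((forestGraph p).ball o (n + 1)).ncard : ℝ) ^ k +
      ∑ b ∈ branches G A H n, ∑ p ∈ Q.filter (fun p => HasBranch p b),
        (((forestGraph p).ball o (n + 1)).ncard : ℝ) ^ k := by
  set v : (α → α) → ℝ := fun p => ((forestGraph p).ball o (n + 1)).ncard
  calc ∑ p ∈ Q, v p ^ (k + 1)
      ≤ ∑ p ∈ Q, (H.card + ((branches G A H n).filter (HasBranch p)).card) * v p ^ k := by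
        refine Finset.sum_le_sum fun p hp => ?_
        rw [pow_succ']
        refine mul_le_mul_of_nonneg_right (le_trans ?_ (Nat.cast_add _ _).le) (by positivity)
        refine Nat.cast_le.2 ?_
        exact (mem_parentMaps.1 (h.forests_subset hp)).ncard_ball_le hA h.root_mem
    _ = ∑ p ∈ Q, (H.card * v p ^ k +
          ∑ b ∈ branches G A H n, if HasBranch p b then v p ^ k else 0) :=
        Finset.sum_congr rfl fun p _ => by
          rw [add_mul, ← Finset.sum_filter, Finset.sum_const, nsmul_eq_mul]
    _ = H.card * ∑ p ∈ Q, v p ^ k +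
        ∑ b ∈ branches G A H n, ∑ p ∈ Q.filter (fun p => HasBranch p b), v p ^ k := by
        rw [Finset.sum_add_distrib, Finset.mul_sum, Finset.sum_comm]
        simp only [Finset.sum_filter]

lemma prod_range_add_mul_succ (a b : ℝ) (k : ℕ) : ∏ j ∈ Finset.range (k + 1), (a + j * b) =
    a * ∏ j ∈ Finset.range k, (a + b + j * b) := by
  rw [Finset.prod_range_succ', Nat.cast_zero, zero_mul, add_zero, mul_comm]
  congr 1
  refine Finset.prod_congr rfl fun j _ => ?_
  push_cast
  ring

lemma IsExploration.sum_ncard_ball_pow_le (h : IsExploration G A o H Q) (hG : PathBound G D C)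
    (hC : 0 ≤ C) (hD : ∀ x, G.degree x ≤ D) (hn : 1 ≤ n) (hA : G.ball o (n + 1) ⊆ A) (k : ℕ) :
    ∑ p ∈ Q, (((forestGraph p).ball o (n + 1)).ncard : ℝ) ^ k ≤
      D * (parentMaps G (A \ H)).card * (((1 + C) * n) ^ k *
        ∏ j ∈ Finset.range (k + 1), ((H.card : ℝ) + j * n)) := by
  induction k generalizing H Q with
  | zero => simpa using mod_cast h.card_le hD
  | succ k ih =>
    set K : ℝ := ((1 + C) * n) ^ k *
      ∏ j ∈ Finset.range (k + 1), ((H.card : ℝ) + n + j * n) with hK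
    set N : Finset α → ℝ := fun B => (parentMaps G (A \ B)).card
    have hmoment : ∀ {H' Q'}, IsExploration G A o H' Q' → H'.card ≤ H.card + n →
        ∑ p ∈ Q', (((forestGraph p).ball o (n + 1)).ncard : ℝ) ^ k ≤ D * N H' * K :=
      fun {H' Q'} h' hH' => by
        have : (H'.card : ℝ) ≤ H.card + n := mod_cast hH'
        refine (ih h').trans ?_
        rw [hK]
        gcongr
    have hbranch : ∀ b ∈ branches G A H n, ∑ p ∈ Q.filter (fun p => HasBranch p b),
        (((forestGraph p).ball o (n + 1)).ncard : ℝ) ^ k ≤ K * (D * N (H ∪ b.2.2.toFinset)) :=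
      fun ⟨z, w, η⟩ hb => (hmoment (h.union_branch hb) ((Finset.card_union_le _ _).trans
        (Nat.add_le_add_left ((List.toFinset_card_le η).trans
          (mem_branches.1 hb).2.2.2) _))).trans_eq (mul_comm _ _)
    calc ∑ p ∈ Q, (((forestGraph p).ball o (n + 1)).ncard : ℝ) ^ (k + 1)
        ≤ H.card * (D * N H * K) + ∑ b ∈ branches G A H n, K * (D * N (H ∪ b.2.2.toFinset)) :=
          (h.sum_ncard_ball_pow_succ_le hA k).trans (add_le_add
            (mul_le_mul_of_nonneg_left (hmoment h (Nat.le_add_right _ _)) (Nat.cast_nonneg _))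
            (Finset.sum_le_sum hbranch))
      _ ≤ H.card * (D * N H * K) + K * (D * (H.card * (C * n * N H))) := by
          rw [← Finset.mul_sum, ← Finset.mul_sum]
          gcongr _ + K * ?_
          exact sum_branches_le hG hC hD hn
      _ = D * N H * H.card * K * (1 + C * n) := by ring
      _ ≤ D * N H * H.card * K * ((1 + C) * n) := by
          have : (1 : ℝ) ≤ n := Nat.one_le_cast.2 hn
          gcongr
          linarith
      _ = D * N H * (((1 + C) * n) ^ (k + 1) *
            ∏ j ∈ Finset.range (k + 1 + 1), ((H.card : ℝ) + j * n)) := by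
          rw [prod_range_add_mul_succ, hK]
          ring

lemma PathBound.card_parentMaps_sdiff_singleton_le (hG : PathBound G D C) (ho : o ∈ A) :
    (D : ℝ) * (parentMaps G (A \ {o})).card ≤ C * (parentMaps G A).card := by
  have hpath : [o] ∈ (selfAvoidingPaths G A o).filter fun η => η.length ≤ 1 := by
    simp [mem_selfAvoidingPaths, ho]
  have hterm := Finset.single_le_sum (f := fun η : List α =>
    ((parentMaps G (A \ η.toFinset)).card : ℝ)) (fun _ _ => Nat.cast_nonneg _) hpath
  have hone := (mul_le_mul_of_nonneg_left hterm D.cast_nonneg).trans (hG 1 le_rfl A o)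
  simpa using hone

lemma prod_one_add_mul_le (hn : 1 ≤ n) (k : ℕ) :
    ∏ j ∈ Finset.range (k + 1), ((1 : ℝ) + j * n) ≤ (2 * n) ^ k * k.factorial := by
  have hn' : (1 : ℝ) ≤ n := Nat.one_le_cast.2 hn
  rw [Finset.prod_range_succ', ← Finset.prod_range_add_one_eq_factorial, Nat.cast_prod,
    Nat.cast_zero, zero_mul, add_zero, mul_one]
  nth_rw 2 [← Finset.card_range k]
  rw [← Finset.prod_const, ← Finset.prod_mul_distrib]
  refine Finset.prod_le_prod (fun j _ => by positivity) fun j _ => ?_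
  push_cast
  nlinarith [(Nat.cast_nonneg j : (0 : ℝ) ≤ j)]

theorem PathBound.sum_ncard_ball_pow_le_factorial (hG : PathBound G D C) (hC : 0 ≤ C)
    (hD : ∀ x, G.degree x ≤ D) (hn : 1 ≤ n) (hA : G.ball o (n + 1) ⊆ A) (k : ℕ) :
    ∑ p ∈ parentMaps G A, (((forestGraph p).ball o (n + 1)).ncard : ℝ) ^ k ≤
      (parentMaps G A).card * ((2 * (1 + C) ^ 2) ^ k * k.factorial * n ^ (2 * k)) := by
  obtain rfl | hk := Nat.eq_zero_or_pos k
  · simp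
  have ho : o ∈ A := hA (SimpleGraph.mem_ball_self (by simp))
  have hroot : IsExploration G A o {o} (parentMaps G A) :=
    ⟨Finset.mem_singleton_self o, Finset.singleton_subset_iff.2 ho, subset_rfl, by
      rw [Finset.coe_singleton]
      exact SimpleGraph.Connected.mk (SimpleGraph.Preconnected.of_subsingleton)⟩
  have hmoment := hroot.sum_ncard_ball_pow_le hG hC hD hn hA k
  rw [Finset.card_singleton, Nat.cast_one] at hmoment
  calc _ ≤ _ := hmoment
    _ ≤ C * (parentMaps G A).card * (((1 + C) * n) ^ k * ((2 * n) ^ k * k.factorial)) := by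
        gcongr ?_ * (_ * ?_)
        · exact hG.card_parentMaps_sdiff_singleton_le ho
        · exact prod_one_add_mul_le hn k
    _ ≤ (1 + C) ^ k * (parentMaps G A).card *
          (((1 + C) * n) ^ k * ((2 * n) ^ k * k.factorial)) := by
        gcongr
        exact (le_add_of_nonneg_left zero_le_one).trans
          (le_self_pow₀ (le_add_of_nonneg_right hC) hk.ne')
    _ = _ := by
        rw [two_mul k]
        simp only [mul_pow, pow_add, sq]
        ring

end BallMoments

section LatticeGraph

variable {x y : V d} {n : ℕ}

/-- The nearest-neighbour graph of `ℤ^d`. -/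
def latticeGraph (d : ℕ) : SimpleGraph (V d) where
  Adj := adj
  symm := ⟨fun x y h => by simpa only [adj, abs_sub_comm] using h⟩
  loopless := ⟨fun x h => by simp [adj] at h⟩

lemma adj_iff_exists_add_stepVec : adj x y ↔ ∃ s : Step d, x + stepVec s = y := by
  constructor
  · intro h
    have hsum : ∑ i, (y i - x i).natAbs = 1 := by
      rw [← Nat.cast_inj (R := ℤ), Nat.cast_sum, Nat.cast_one, ← h]
      exact Finset.sum_congr rfl fun i _ => by rw [Int.natCast_natAbs, abs_sub_comm]
    obtain ⟨i, hi⟩ := (Finsupp.sum_eq_one_iff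
      (Finsupp.equivFunOnFinite.symm fun i => (y i - x i).natAbs)).1
        (by rwa [Finsupp.sum_fintype _ _ fun _ => rfl])
    refine ⟨(i, decide (0 < y i - x i)), funext fun j => ?_⟩
    have hj := DFunLike.congr_fun hi j
    simp only [Finsupp.equivFunOnFinite_symm_apply_apply, Finsupp.single_apply] at hj
    obtain rfl | hij := eq_or_ne i j
    · rw [if_pos rfl] at hj
      simp only [stepVec, Pi.add_apply, Pi.single_eq_same, decide_eq_true_eq]
      split_ifs <;> omega
    · rw [if_neg hij] at hj
      simp only [stepVec, Pi.add_apply, Pi.single_eq_of_ne' hij]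
      omega
  · rintro ⟨s, rfl⟩
    rw [adj, Finset.sum_eq_single_of_mem s.1 (Finset.mem_univ _) fun i _ hi => by
      simp [stepVec, hi]]
    cases h : s.2 <;> simp [stepVec, h]

lemma add_stepVec_injective (x : V d) : Function.Injective fun s : Step d => x + stepVec s := by
  rintro ⟨i, b⟩ ⟨j, c⟩ h
  have hi := congrFun (add_left_cancel h) i
  obtain rfl | hij := eq_or_ne i j
  · cases b <;> cases c <;> simp [stepVec] at hi ⊢
  · cases b <;> simp [stepVec, hij] at hi

noncomputable instance : (latticeGraph d).LocallyFinite := fun x =>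
  ((Set.finite_range fun s : Step d => x + stepVec s).subset fun _ h =>
    adj_iff_exists_add_stepVec.1 h).fintype

lemma neighborFinset_latticeGraph (x : V d) :
    (latticeGraph d).neighborFinset x = Finset.univ.image fun s : Step d => x + stepVec s := by
  ext y
  rw [SimpleGraph.mem_neighborFinset, Finset.mem_image]
  simp only [Finset.mem_univ, true_and]
  exact adj_iff_exists_add_stepVec

lemma degree_latticeGraph (x : V d) : (latticeGraph d).degree x = 2 * d := by
  rw [← SimpleGraph.card_neighborFinset_eq_degree, neighborFinset_latticeGraph,
    Finset.card_image_of_injective _ (add_stepVec_injective x),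
    Finset.card_univ, Fintype.card_prod, Fintype.card_fin, Fintype.card_bool, mul_comm]

lemma sum_neighborFinset_latticeGraph (x : V d) (f : V d → ℝ) :
    ∑ y ∈ (latticeGraph d).neighborFinset x, f y = (2 * d : ℕ) * 𝔼 s, f (x + stepVec s) := by
  rw [neighborFinset_latticeGraph, Finset.sum_image (add_stepVec_injective x).injOn,
    ← Finset.card_mul_expect, Finset.card_univ, Fintype.card_prod, Fintype.card_fin,
    Fintype.card_bool, mul_comm d]

lemma exists_pathBound_latticeGraph (hd : 5 ≤ d) :
    ∃ C : ℝ, 0 < C ∧ PathBound (latticeGraph d) (2 * d) C := by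
  obtain ⟨C, hC, hsuper⟩ := exists_loopErasure_supersolution hd
  refine ⟨C, hC, fun n hn B z => ?_⟩
  obtain ⟨f, hf0, hfle, hf⟩ := hsuper n hn
  have hsum := sum_selfAvoidingPaths_le (latticeGraph d) B z hf0
    (g := fun η => (2 * d : ℕ) * {ξ : List (V d) | ξ.length ≤ n}.indicator 1 η) fun x t => by
      rw [sum_neighborFinset_latticeGraph, degree_latticeGraph, ← mul_add]
      exact mul_le_mul_of_nonneg_left (hf (x :: t)) (Nat.cast_nonneg _)
  refine le_trans (le_of_eq ?_)
    (hsum.trans (mul_le_mul_of_nonneg_right (hfle [z]) (Nat.cast_nonneg _)))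
  rw [Finset.sum_filter, Finset.mul_sum]
  refine Finset.sum_congr rfl fun η _ => ?_
  rw [Set.indicator_apply]
  split_ifs with h h' h'
  · simp [mul_comm]
  · exact absurd h h'
  · exact absurd h' h
  · simp

lemma abs_sub_apply_le_length (W : (latticeGraph d).Walk x y) (i : Fin d) :
    |x i - y i| ≤ W.length := by
  induction W with
  | nil => simp
  | @cons x w y hxw _ ih =>
    have hstep : |x i - w i| ≤ 1 := le_of_le_of_eq (Finset.single_le_sum
      (f := fun i => |x i - w i|) (fun _ _ => abs_nonneg _) (Finset.mem_univ i)) hxw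
    rw [SimpleGraph.Walk.length_cons]
    push_cast
    linarith [abs_sub_le (x i) (w i) (y i)]

lemma ball_latticeGraph_subset_cube : (latticeGraph d).ball y (n + 1) ⊆ cube y n := by
  intro x hx i
  obtain ⟨W, hW⟩ := mem_ball_add_one_iff.1 hx
  exact (abs_sub_apply_le_length W i).trans (mod_cast hW)

end LatticeGraph

section TreeEdges

variable {α : Type*} {G : SimpleGraph α} {A : Finset α} {p q : α → α} {u w x : α}

/-- The edges of the forest encoded by the parent map `p` on `A`. -/
def treeEdges (A : Finset α) (p : α → α) : Set (Sym2 α) := (fun x => s(x, p x)) '' (A : Set α)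

lemma mk_mem_treeEdges : s(u, w) ∈ treeEdges A p ↔ (u ∈ A ∧ p u = w) ∨ (w ∈ A ∧ p w = u) := by
  simp only [treeEdges, Set.mem_image, Finset.mem_coe, Sym2.eq_iff]
  constructor
  · rintro ⟨x, hx, ⟨rfl, h⟩ | ⟨rfl, h⟩⟩
    · exact Or.inl ⟨hx, h⟩
    · exact Or.inr ⟨hx, h⟩
  · rintro (⟨hu, h⟩ | ⟨hw, h⟩)
    · exact ⟨u, hu, Or.inl ⟨rfl, h⟩⟩
    · exact ⟨w, hw, Or.inr ⟨rfl, h⟩⟩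

lemma IsParentMap.mk_mem_treeEdges_iff (hp : IsParentMap G A p) (huw : u ≠ w) :
    s(u, w) ∈ treeEdges A p ↔ (forestGraph p).Adj u w := by
  rw [mk_mem_treeEdges, forestGraph_adj, and_iff_right huw]
  exact or_congr (and_iff_right_of_imp (hp.mem_of_apply_eq huw))
    (and_iff_right_of_imp (hp.mem_of_apply_eq huw.symm))

lemma IsParentMap.apply_apply_ne (hp : IsParentMap G A p) (hx : x ∈ A) : p (p x) ≠ x := by
  intro hcycle
  have hpx : p x ∈ A := by
    by_contra h
    exact (hp.adj x hx).ne ((hp.apply_eq _ h).symm.trans hcycle).symm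
  obtain ⟨y, hy, hpy⟩ := hp.exists_exit (H := {x, p x})
    (Finset.insert_subset hx (Finset.singleton_subset_iff.2 hpx)) (Finset.mem_insert_self x _)
  simp only [Finset.mem_insert, Finset.mem_singleton] at hy hpy
  obtain rfl | rfl := hy
  · exact hpy (Or.inr rfl)
  · exact hpy (Or.inl hcycle)

lemma IsParentMap.ncard_treeEdges (hp : IsParentMap G A p) : (treeEdges A p).ncard = A.card := by
  rw [← Set.ncard_coe_finset]
  refine Set.InjOn.ncard_image fun x hx y _ hxy => ?_
  obtain ⟨h, -⟩ | ⟨h, h'⟩ := Sym2.eq_iff.1 hxy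
  · exact h
  · exact absurd ((congrArg p h').trans h.symm) (hp.apply_apply_ne hx)

lemma IsParentMap.eq_of_treeEdges_eq (hp : IsParentMap G A p) (hq : IsParentMap G A q)
    (h : treeEdges A p = treeEdges A q) : p = q := by
  have hA : ∀ x ∈ A, p x = q x := by
    by_contra! hne
    obtain ⟨x, hx, hxne⟩ := hne
    obtain ⟨y, hy, hpy⟩ := hp.exists_exit (Finset.filter_subset (fun x => p x ≠ q x) A)
      (Finset.mem_filter.2 ⟨hx, hxne⟩)
    obtain ⟨hyA, hyne⟩ := Finset.mem_filter.1 hy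
    have hedge : s(y, p y) ∈ treeEdges A q := h ▸ mk_mem_treeEdges.2 (Or.inl ⟨hyA, rfl⟩)
    obtain ⟨-, hqy⟩ | ⟨hpyA, hqpy⟩ := mk_mem_treeEdges.1 hedge
    · exact hyne hqy.symm
    · exact hpy (Finset.mem_filter.2 ⟨hpyA, hqpy.symm ▸ hp.apply_apply_ne hyA⟩)
  funext x
  by_cases hx : x ∈ A
  · exact hA x hx
  · rw [hp.apply_eq x hx, hq.apply_eq x hx]

lemma IsParentMap.exists_isChain_treeEdges (hp : IsParentMap G A p) (x : α) :
    ∃ l : List α, l.IsChain (fun u w => G.Adj u w ∧ s(u, w) ∈ treeEdges A p) ∧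
      l.head? = some x ∧ ∃ y, l.getLast? = some y ∧ y ∉ (A : Set α) := by
  obtain ⟨k, hk⟩ := hp.exists_iterate_notMem x
  induction k generalizing x with
  | zero => exact ⟨[x], .singleton x, rfl, x, rfl, hk⟩
  | succ k ih =>
    by_cases hx : x ∈ A
    · obtain ⟨l, hl, hhead, y, hlast, hy⟩ := ih (p x) hk
      refine ⟨x :: l, List.isChain_cons.2 ⟨fun v hv => ?_, hl⟩, rfl, y, ?_, hy⟩
      · obtain rfl := Option.some.inj (hhead.symm.trans hv)
        exact ⟨hp.adj x hx, mk_mem_treeEdges.2 (Or.inl ⟨hx, rfl⟩)⟩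
      · rw [List.getLast?_cons, hlast, Option.getD_some]
    · exact ⟨[x], .singleton x, rfl, x, rfl, hx⟩

lemma exists_isParentMap_of_rank {R : α → α → Prop} (hR : ∀ u w, R u w → G.Adj u w) (D : α → ℕ)
    (hD : ∀ x ∈ A, ∃ y, R x y ∧ D y < D x) : ∃ p, IsParentMap G A p ∧ ∀ x ∈ A, R x (p x) := by
  choose! next hnext using hD
  have hA : ∀ x ∈ A, A.piecewise next id x = next x := fun x hx => A.piecewise_eq_of_mem _ _ hx
  refine ⟨A.piecewise next id, ⟨fun x hx => ?_, fun x hx => A.piecewise_eq_of_notMem _ _ hx,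
    fun x => ?_⟩, fun x hx => ?_⟩
  · exact hA x hx ▸ hR _ _ (hnext x hx).1
  · induction hm : D x using Nat.strong_induction_on generalizing x with
    | _ m ih =>
      by_cases hx : x ∈ A
      · obtain ⟨k, hk⟩ := ih _ (hm ▸ (hnext x hx).2) (next x) rfl
        exact ⟨k + 1, by rwa [Function.iterate_succ_apply, hA x hx]⟩
      · exact ⟨0, hx⟩
  · exact hA x hx ▸ (hnext x hx).1

/-- The rank is the length of a shortest chain leaving `A`. -/
lemma exists_rank_of_exists_isChain {R : α → α → Prop} (h : ∀ x ∈ A, ∃ l : List α, l.IsChain R ∧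
      l.head? = some x ∧ ∃ y, l.getLast? = some y ∧ y ∉ (A : Set α)) :
    ∃ D : α → ℕ, ∀ x ∈ A, ∃ y, R x y ∧ D y < D x := by
  set lengths : α → Set ℕ := fun x => {m | ∃ l : List α, l.IsChain R ∧ l.head? = some x ∧
    (∃ y, l.getLast? = some y ∧ y ∉ (A : Set α)) ∧ l.length = m}
  refine ⟨fun x => sInf (lengths x), fun x hx => ?_⟩
  obtain ⟨l, hl, hhead, hlast⟩ := h x hx
  obtain ⟨l', hchain, hhead, ⟨y, hlast, hy⟩, hlen⟩ :=
    Nat.sInf_mem (s := lengths x) ⟨_, l, hl, hhead, hlast, rfl⟩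
  obtain _ | ⟨a, _ | ⟨b, t⟩⟩ := l'
  · cases hhead
  · obtain rfl := Option.some.inj hhead
    obtain rfl := Option.some.inj hlast
    exact absurd hx hy
  · obtain rfl := Option.some.inj hhead
    rw [List.isChain_cons_cons] at hchain
    refine ⟨b, hchain.1, ?_⟩
    dsimp only
    rw [← hlen, List.length_cons, Nat.lt_succ_iff]
    exact Nat.sInf_le ⟨b :: t, hchain.2, rfl, ⟨y, by rwa [List.getLast?_cons_cons] at hlast, hy⟩,
      rfl⟩

end TreeEdges

section WiredSpanningTrees

variable {A : Finset (V d)}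

lemma treeEdges_mem_wiredSpanningTrees {p : V d → V d} (hp : IsParentMap (latticeGraph d) A p) :
    treeEdges A p ∈ wiredSpanningTrees (A : Set (V d)) := by
  refine ⟨?_, hp.ncard_treeEdges.trans (Set.ncard_coe_finset A).symm,
    fun x _ => hp.exists_isChain_treeEdges x⟩
  rintro _ ⟨x, hx, rfl⟩
  exact ⟨⟨x, p x, rfl, hp.adj x hx⟩, x, Sym2.mem_mk_left _ _, hx⟩

lemma exists_treeEdges_eq {T : Set (Sym2 (V d))} (hT : T ∈ wiredSpanningTrees (A : Set (V d))) :
    ∃ p, IsParentMap (latticeGraph d) A p ∧ treeEdges A p = T := by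
  obtain ⟨hedge, hcard, hchain⟩ := hT
  obtain ⟨D, hD⟩ := exists_rank_of_exists_isChain hchain
  obtain ⟨p, hp, hpT⟩ := exists_isParentMap_of_rank (G := latticeGraph d) (fun _ _ h => h.1) D hD
  have hfin : T.Finite := by
    obtain hT | hT := T.eq_empty_or_nonempty
    · exact hT ▸ Set.finite_empty
    · obtain ⟨e, he⟩ := hT
      obtain ⟨v, -, hv⟩ := (hedge e he).2
      exact Set.finite_of_ncard_pos (hcard ▸ (Set.ncard_pos A.finite_toSet).2 ⟨v, hv⟩)
  refine ⟨p, hp, Set.eq_of_subset_of_ncard_le ?_ ?_ hfin⟩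
  · rintro _ ⟨x, hx, rfl⟩
    exact (hpT x hx).2
  · rw [hcard, hp.ncard_treeEdges, Set.ncard_coe_finset]

lemma ncard_wiredSpanningTrees_sep (P : Set (Sym2 (V d)) → Prop) :
    {T ∈ wiredSpanningTrees (A : Set (V d)) | P T}.ncard =
      ((parentMaps (latticeGraph d) A).filter fun p => P (treeEdges A p)).card := by
  have himage : {T ∈ wiredSpanningTrees (A : Set (V d)) | P T} = treeEdges A ''
      ((parentMaps (latticeGraph d) A).filter fun p => P (treeEdges A p) : Set (V d → V d)) := by
    ext T
    simp only [Set.mem_ofPred_eq, Set.mem_image, Finset.mem_coe, Finset.mem_filter, mem_parentMaps]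
    constructor
    · rintro ⟨hT, hP⟩
      obtain ⟨p, hp, rfl⟩ := exists_treeEdges_eq hT
      exact ⟨p, ⟨hp, hP⟩, rfl⟩
    · rintro ⟨p, ⟨hp, hP⟩, rfl⟩
      exact ⟨treeEdges_mem_wiredSpanningTrees hp, hP⟩
  rw [himage, Set.InjOn.ncard_image fun p hp q hq h => ?_, Set.ncard_coe_finset]
  simp only [Finset.mem_coe, Finset.mem_filter, mem_parentMaps] at hp hq
  exact hp.1.eq_of_treeEdges_eq hq.1 h

end WiredSpanningTrees

section Configurations

variable {ω ω' : Config d} {n : ℕ}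

lemma mem_ball_add_one_iff_exists_isChain {α : Type*} {G : SimpleGraph α} {o y : α} :
    y ∈ G.ball o (n + 1) ↔ ∃ l : List α,
      l.IsChain G.Adj ∧ l.head? = some o ∧ l.getLast? = some y ∧ l.length ≤ n + 1 := by
  rw [mem_ball_add_one_iff]
  constructor
  · rintro ⟨W, hW⟩
    refine ⟨W.reverse.support, W.reverse.isChain_adj_support, ?_, ?_, ?_⟩
    · rw [← W.reverse.cons_tail_support, List.head?_cons]
    · rw [List.getLast?_eq_some_getLast W.reverse.support_ne_nil, W.reverse.getLast_support]
    · rw [W.reverse.length_support, W.length_reverse]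
      exact Nat.succ_le_succ hW
  · rintro ⟨l, hl, hhead, hlast, hlen⟩
    have hne : l ≠ [] := by
      rintro rfl
      cases hhead
    obtain rfl := Option.some.inj ((List.head?_eq_some_head hne).symm.trans hhead)
    obtain rfl := Option.some.inj ((List.getLast?_eq_some_getLast hne).symm.trans hlast)
    refine ⟨(SimpleGraph.Walk.ofSupport l hne hl).reverse, ?_⟩
    rw [SimpleGraph.Walk.length_reverse, SimpleGraph.Walk.length_ofSupport]
    omega

/-- The subgraph of `ℤ^d` formed by the open edges of the configuration `ω`. -/
def openGraph (ω : Config d) : SimpleGraph (V d) where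
  Adj u w := adj u w ∧ ω s(u, w) = true
  symm := ⟨fun _ _ h => ⟨SimpleGraph.Adj.symm (G := latticeGraph d) h.1, Sym2.eq_swap ▸ h.2⟩⟩
  loopless := ⟨fun _ h => (latticeGraph d).loopless.irrefl _ h.1⟩

lemma openGraph_le : openGraph ω ≤ latticeGraph d := fun _ _ h => h.1

lemma ballU_eq_ball : ballU ω n = (openGraph ω).ball 0 (n + 1) :=
  Set.ext fun _ => (mem_ball_add_one_iff_exists_isChain (G := openGraph ω)).symm

/-- The unordered pairs of vertices of the cube `cube 0 n`. -/
noncomputable def cubePairs (d n : ℕ) : Finset (Sym2 (V d)) :=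
  (Finset.Icc (fun _ => -(n : ℤ)) fun _ => (n : ℤ)).sym2

lemma coe_Icc_eq_cube :
    (Finset.Icc (fun _ => -(n : ℤ)) (fun _ => (n : ℤ)) : Finset (V d)) = cube (0 : V d) n := by
  ext x
  simp [cube, abs_le, Pi.le_def, forall_and]

lemma mk_mem_cubePairs {u w : V d} :
    s(u, w) ∈ cubePairs d n ↔ u ∈ cube (0 : V d) n ∧ w ∈ cube (0 : V d) n := by
  rw [cubePairs, Finset.mk_mem_sym2_iff, ← coe_Icc_eq_cube, Finset.mem_coe, Finset.mem_coe]

lemma ballU_subset (h : ∀ e ∈ cubePairs d n, ω e = ω' e) : ballU ω n ⊆ ballU ω' n := by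
  rw [ballU_eq_ball, ballU_eq_ball]
  intro y hy
  obtain ⟨W, hW⟩ := mem_ball_add_one_iff.1 hy
  have hcube : ∀ v ∈ W.support, v ∈ cube (0 : V d) n := fun v hv =>
    ball_latticeGraph_subset_cube
      (ball_mono_graph openGraph_le _ _ (mem_ball_of_mem_support W hW hv))
  refine mem_ball_add_one_iff.2 ⟨W.transfer (openGraph ω') fun e => ?_, by rwa [W.length_transfer]⟩
  induction e with
  | _ u w =>
    intro he
    have hadj : (openGraph ω).Adj u w := W.adj_of_mem_edges he
    refine ⟨hadj.1, (h _ (mk_mem_cubePairs.2 ⟨?_, ?_⟩)).symm.trans hadj.2⟩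
    · exact hcube u (W.fst_mem_support_of_mem_edges he)
    · exact hcube w (W.snd_mem_support_of_mem_edges he)

lemma dependsOn_ballU (n : ℕ) : DependsOn (fun ω : Config d => ballU ω n) (cubePairs d n) :=
  fun _ _ h => (ballU_subset h).antisymm (ballU_subset fun e he => (h e he).symm)

/-- The configuration whose open edges are the elements of `T`. -/
noncomputable def edgeConfig (T : Set (Sym2 (V d))) : Config d := fun e => decide (e ∈ T)

lemma edgeConfig_apply_eq_true {T : Set (Sym2 (V d))} {e : Sym2 (V d)} :
    edgeConfig T e = true ↔ e ∈ T :=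
  decide_eq_true_iff

lemma IsParentMap.openGraph_edgeConfig {A : Finset (V d)} {p : V d → V d}
    (hp : IsParentMap (latticeGraph d) A p) :
    openGraph (edgeConfig (treeEdges A p)) = forestGraph p := by
  ext u w
  refine (and_congr_right fun huw => ?_).trans (and_iff_right_of_imp fun h => hp.forestGraph_le h)
  rw [edgeConfig_apply_eq_true]
  exact hp.mk_mem_treeEdges_iff (SimpleGraph.Adj.ne (G := latticeGraph d) huw)

end Configurations

section WiredLimit

variable {K : Finset (Sym2 (V d))} {F : Config d → ℝ}

lemma measurableSet_cylEvent (K : Finset (Sym2 (V d))) (f : Sym2 (V d) → Bool) :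
    MeasurableSet (cylEvent K f) := by
  have hinter : cylEvent K f = ⋂ e ∈ K, {ω : Config d | ω e = f e} := by
    ext ω
    simp [cylEvent]
  exact hinter ▸ Finset.measurableSet_biInter _ fun e _ =>
    measurableSet_eq_fun (measurable_pi_apply e) measurable_const

lemma edgeConfig_mem_cylEvent_iff {T : Set (Sym2 (V d))} {f : Sym2 (V d) → Bool} :
    edgeConfig T ∈ cylEvent K f ↔ ∀ e ∈ K, (e ∈ T ↔ f e = true) :=
  forall₂_congr fun _ _ => Bool.eq_iff_iff.trans (iff_congr edgeConfig_apply_eq_true Iff.rfl)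

lemma mem_cylEvent_edgeConfig_iff {P : Finset (Sym2 (V d))} (hP : P ⊆ K) {ω : Config d} :
    ω ∈ cylEvent K (edgeConfig (P : Set (Sym2 (V d)))) ↔ K.filter (fun e => ω e = true) = P := by
  have hmem : ω ∈ cylEvent K (edgeConfig (P : Set (Sym2 (V d)))) ↔
      ∀ e ∈ K, (ω e = true ↔ e ∈ (P : Set (Sym2 (V d)))) :=
    forall₂_congr fun _ _ => Bool.eq_iff_iff.trans (iff_congr Iff.rfl edgeConfig_apply_eq_true)
  rw [hmem, Finset.ext_iff]
  refine forall_congr' fun e => ?_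
  rw [Finset.mem_filter]
  exact ⟨fun h => ⟨fun he => (h he.1).1 he.2, fun he => ⟨hP he, (h (hP he)).2 he⟩⟩,
    fun h he => ⟨fun hω => h.1 ⟨he, hω⟩, fun heP => (h.2 heP).2⟩⟩

lemma eq_sum_indicator_cylEvent (hF : DependsOn F K) (ω : Config d) :
    F ω = ∑ P ∈ K.powerset, (cylEvent K (edgeConfig (P : Set (Sym2 (V d))))).indicator
      (fun _ => F (edgeConfig (P : Set (Sym2 (V d))))) ω := by
  have hmem : K.filter (fun e => ω e = true) ∈ K.powerset :=
    Finset.mem_powerset.2 (Finset.filter_subset _ _)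
  have hcyl := (mem_cylEvent_edgeConfig_iff (Finset.mem_powerset.1 hmem)).2 (rfl : _ = _)
  rw [Finset.sum_eq_single_of_mem _ hmem fun P hP hne => Set.indicator_of_notMem
      (fun h => hne ((mem_cylEvent_edgeConfig_iff (Finset.mem_powerset.1 hP)).1 h).symm) _,
    Set.indicator_of_mem hcyl]
  exact hF hcyl

lemma integrable_of_dependsOn (hF : DependsOn F K) (μ : Measure (Config d)) [IsFiniteMeasure μ] :
    Integrable F μ := by
  rw [funext (eq_sum_indicator_cylEvent hF)]
  exact integrable_finsetSum _ fun P _ =>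
    (integrable_const _).indicator (measurableSet_cylEvent K _)

lemma integral_eq_sum_cylEvent (hF : DependsOn F K) (μ : Measure (Config d)) [IsFiniteMeasure μ] :
    ∫ ω, F ω ∂μ = ∑ P ∈ K.powerset, F (edgeConfig (P : Set (Sym2 (V d)))) *
      (μ (cylEvent K (edgeConfig (P : Set (Sym2 (V d)))))).toReal := by
  rw [integral_congr_ae (.of_forall (eq_sum_indicator_cylEvent hF)), integral_finsetSum _ fun P _ =>
    (integrable_const _).indicator (measurableSet_cylEvent K _)]
  refine Finset.sum_congr rfl fun P _ => ?_
  rw [integral_indicator_const _ (measurableSet_cylEvent K _), smul_eq_mul, mul_comm]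
  rfl

lemma sum_parentMaps_eq_sum_ncard (hF : DependsOn F K) (A : Finset (V d)) :
    ∑ p ∈ parentMaps (latticeGraph d) A, F (edgeConfig (treeEdges A p)) =
      ∑ P ∈ K.powerset, F (edgeConfig (P : Set (Sym2 (V d)))) *
        ({T ∈ wiredSpanningTrees (A : Set (V d)) |
          ∀ e ∈ K, (e ∈ T ↔ edgeConfig (P : Set (Sym2 (V d))) e = true)}.ncard : ℝ) := by
  simp only [eq_sum_indicator_cylEvent hF (edgeConfig (treeEdges A _))]
  rw [Finset.sum_comm]
  refine Finset.sum_congr rfl fun P _ => ?_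
  simp only [Set.indicator_apply, edgeConfig_mem_cylEvent_iff]
  rw [ncard_wiredSpanningTrees_sep, ← Finset.sum_filter, Finset.sum_const, nsmul_eq_mul, mul_comm]
  congr!

lemma ncard_wiredSpanningTrees (A : Finset (V d)) :
    (wiredSpanningTrees (A : Set (V d))).ncard = (parentMaps (latticeGraph d) A).card := by
  simpa using ncard_wiredSpanningTrees_sep (A := A) fun _ => True

lemma IsWiredLimit.tendsto_average {A : ℕ → Finset (V d)} {μ : Measure (Config d)}
    [IsFiniteMeasure μ] (hμ : IsWiredLimit (fun r => (A r : Set (V d))) μ) (hF : DependsOn F K) :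
    Filter.Tendsto (fun r => (∑ p ∈ parentMaps (latticeGraph d) (A r),
      F (edgeConfig (treeEdges (A r) p))) / (parentMaps (latticeGraph d) (A r)).card)
        Filter.atTop (nhds (∫ ω, F ω ∂μ)) := by
  rw [integral_eq_sum_cylEvent hF]
  simp only [sum_parentMaps_eq_sum_ncard hF, Finset.sum_div, mul_div_assoc,
    ← ncard_wiredSpanningTrees]
  exact tendsto_finsetSum _ fun P _ => (hμ K (edgeConfig (P : Set (Sym2 (V d))))).const_mul _

lemma IsWiredLimit.lintegral_ncard_ballU_pow_le {A : ℕ → Finset (V d)} {μ : Measure (Config d)}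
    [IsFiniteMeasure μ] (hμ : IsWiredLimit (fun r => (A r : Set (V d))) μ) {n k : ℕ} {M : ℝ}
    (hM : 0 ≤ M) (hA : ∀ᶠ r in Filter.atTop, ∑ p ∈ parentMaps (latticeGraph d) (A r),
      (((forestGraph p).ball 0 (n + 1)).ncard : ℝ) ^ k ≤
        (parentMaps (latticeGraph d) (A r)).card * M) :
    ∫⁻ ω, ((ballU ω n).ncard : ℝ≥0∞) ^ k ∂μ ≤ ENNReal.ofReal M := by
  have hF : DependsOn (fun ω : Config d => ((ballU ω n).ncard : ℝ) ^ k) (cubePairs d n) :=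
    fun _ _ h => congrArg (fun s : Set (V d) => (s.ncard : ℝ) ^ k) (dependsOn_ballU n h)
  have hint : ∫ ω, ((ballU ω n).ncard : ℝ) ^ k ∂μ ≤ M := by
    refine le_of_tendsto (hμ.tendsto_average hF) (hA.mono fun r hr => ?_)
    refine div_le_of_le_mul₀ (Nat.cast_nonneg _) hM ((Finset.sum_congr rfl fun p hp => ?_).trans_le
      (hr.trans_eq (mul_comm _ _)))
    rw [ballU_eq_ball, (mem_parentMaps.1 hp).openGraph_edgeConfig]
  calc ∫⁻ ω, ((ballU ω n).ncard : ℝ≥0∞) ^ k ∂μ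
      = ∫⁻ ω, ENNReal.ofReal (((ballU ω n).ncard : ℝ) ^ k) ∂μ := by
        simp only [ENNReal.ofReal_pow (Nat.cast_nonneg _), ENNReal.ofReal_natCast]
    _ = ENNReal.ofReal (∫ ω, ((ballU ω n).ncard : ℝ) ^ k ∂μ) :=
        (ofReal_integral_eq_lintegral_ofReal (integrable_of_dependsOn hF μ)
          (.of_forall fun _ => by positivity)).symm
    _ ≤ ENNReal.ofReal M := ENNReal.ofReal_le_ofReal hint

end WiredLimit

theorem usf_ball_moment_bounds_general (hd : 5 ≤ d) : ∃ C₁ : ℝ, 0 < C₁ ∧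
    ∀ (A : ℕ → Finset (V d)) (μ : Measure (Config d)) [IsFiniteMeasure μ],
      (∀ n : ℕ, ∀ᶠ r in Filter.atTop, cube (0 : V d) n ⊆ A r) →
      IsWiredLimit (fun r => (A r : Set (V d))) μ → ∀ k n : ℕ, 1 ≤ n →
        ∫⁻ ω, ((ballU ω n).ncard : ℝ≥0∞) ^ k ∂μ
          ≤ ENNReal.ofReal (C₁ ^ k * (Nat.factorial k : ℝ) * (n : ℝ) ^ (2 * k)) := by
  obtain ⟨C, hC, hpath⟩ := exists_pathBound_latticeGraph hd
  refine ⟨2 * (1 + C) ^ 2, by positivity, fun A μ _ hA hμ k n hn =>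
    hμ.lintegral_ncard_ballU_pow_le (by positivity) ?_⟩
  filter_upwards [hA n] with r hr
  exact hpath.sum_ncard_ball_pow_le_factorial hC.le (fun x => (degree_latticeGraph x).le) hn
    (ball_latticeGraph_subset_cube.trans hr) k

/-- Theorem 4.1 (moment bounds).  Let `d ≥ 5` and let `𝒰` be the uniform spanning
forest of `ℤ^d`.  There is `C₁ = C₁(d)` such that for all `k ≥ 0` and `n ≥ 1`,
`E( |B_𝒰(0,n)|^k ) ≤ C₁^k k! n^{2k}`. -/
theorem usf_ball_moment_bounds :
    ∀ d : ℕ, 5 ≤ d → ∃ C₁ : ℝ, 0 < C₁ ∧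
      ∀ μ : Measure (Config d), IsProbabilityMeasure μ → IsUSF μ →
      ∀ k n : ℕ, 1 ≤ n →
        ∫⁻ ω, ((ballU ω n).ncard : ℝ≥0∞) ^ k ∂μ
          ≤ ENNReal.ofReal (C₁ ^ k * (Nat.factorial k : ℝ) * (n : ℝ) ^ (2 * k)) := by
  intro d hd
  obtain ⟨C₁, hC₁, hbound⟩ := usf_ball_moment_bounds_general hd
  refine ⟨C₁, hC₁, fun μ _ hμ =>
    hbound (fun r => Finset.Icc (fun _ => -(r : ℤ)) fun _ => r) μ ?_ ?_⟩
  · intro n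
    filter_upwards [Filter.eventually_ge_atTop n] with r hr
    rw [coe_Icc_eq_cube]
    exact fun x hx i => (hx i).trans (Nat.cast_le.2 hr)
  · simpa only [coe_Icc_eq_cube, IsUSF] using hμ

end USFPaper
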